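/- arXiv:2602.21509 — 3 statements merged into one kernel-verified Lean document; each statement's English description precedes it below -/
import Mathlib

section
/- Let D¹ and D² be nonempty finite subsets of ℝ^d with ‖x‖₂ ≤ x_max for every x ∈ D¹ ∪ D², and fix integers n₁, n₂ ≥ 1. Draw X₁⁽¹⁾,…,X_{n₁}⁽¹⁾ i.i.d. uniformly (with replacement) from D¹ and independently X₁⁽²⁾,…,X_{n₂}⁽²⁾ i.i.d. uniformly (with replacement) from D², and let n′ = min{n₁, n₂}. Then there exists a constant C = C(ξ, ζ, ν, x_max) > 0 such that for every δ ∈ (0,1), with probability at least 1 − δ, sup over Θ ∈ Φ_{ξ,ζ,ν} of |Δ(Θ) − Δₙ(Θ)| ≤ 4C√(d/n′) + 8√(2 log(8/δ)/n′), where Δ(Θ) = max over k ∈ [K] of |(1/|D¹|) Σ_{x∈D¹} ψ_k(x;Θ) − (1/|D²|) Σ_{x∈D²} ψ_k(x;Θ)| and Δₙ(Θ) = max over k ∈ [K] of |(1/n₁) Σ_{i=1}^{n₁} ψ_k(X_i⁽¹⁾;Θ) − (1/n₂) Σ_{j=1}^{n₂} ψ_k(X_j⁽²⁾;Θ)|.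 -/
open MeasureTheory

/-- Density of a `d`-dimensional Gaussian with mean `μ` and covariance `S`. -/
noncomputable def gaussDensity {d : ℕ} (x μ : EuclideanSpace ℝ (Fin d))
    (S : Matrix (Fin d) (Fin d) ℝ) : ℝ :=
  (2 * Real.pi) ^ (-(d : ℝ) / 2) * S.det ^ (-(1 : ℝ) / 2) *
    Real.exp (-(∑ i, ∑ j, (x - μ) i * S⁻¹ i j * (x - μ) j) / 2)

/-- Responsibility (soft assignment) of component `k` for the Gaussian mixture with
weights `π`, means `μ` and covariances `S`. -/
noncomputable def resp {d K : ℕ} (π : Fin K → ℝ)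
    (μ : Fin K → EuclideanSpace ℝ (Fin d)) (S : Fin K → Matrix (Fin d) (Fin d) ℝ)
    (k : Fin K) (x : EuclideanSpace ℝ (Fin d)) : ℝ :=
  π k * gaussDensity x (μ k) (S k) / ∑ l, π l * gaussDensity x (μ l) (S l)

/-- The constrained parameter set `Φ_{ξ,ζ,ν}`: mixture weights in the open simplex with
`ξ < π_k < 1 - ξ`, means bounded by `ν`, and symmetric covariances whose eigenvalues all
lie in `(ζ, 1/ζ)` (expressed via the quadratic form). -/
def inPhi {d K : ℕ} (ξ ζ ν : ℝ) (π : Fin K → ℝ)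
    (μ : Fin K → EuclideanSpace ℝ (Fin d)) (S : Fin K → Matrix (Fin d) (Fin d) ℝ) : Prop :=
  (∀ k, 0 < π k) ∧ (∑ k, π k = 1) ∧
  (∀ k, ξ < π k ∧ π k < 1 - ξ) ∧ (∀ k, ‖μ k‖ ≤ ν) ∧
  (∀ k, (S k).IsSymm ∧ ∀ v : EuclideanSpace ℝ (Fin d), v ≠ 0 →
    ζ * ‖v‖ ^ 2 < ∑ i, ∑ j, v i * S k i j * v j ∧
      (∑ i, ∑ j, v i * S k i j * v j) < (1 / ζ) * ‖v‖ ^ 2)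

/-!
McDiarmid's inequality concentrates the largest deviation between population and sample averages
around its mean, and symmetrization bounds this mean by twice the Rademacher complexity of the
responsibilities on the sample. Uncountable classes of continuous functions reduce to countable
ones, because `C(ℝ^d, ℝ)` is second countable.

For the complexity, write a responsibility as `exp (q_k - log (∑ l, w_l * exp q_l))` times `w_k`,
where the exponents `q_l` are quadratic forms in `x - μ_l` and the normalised weights `w_l` absorb
the determinants, on which the bound does not depend. Each operation involved (Lipschitz maps,
convex combinations, multiplication by a weight in `[0, 1]`) costs a factor independent of `K` and
`d`, or an additive term of order `√n`. Expanding the quadratic forms into inner products leaves a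
complexity of at most `C * √(d * n)`, by Cauchy–Schwarz.
-/

section Rademacher

open scoped BigOperators

lemma sum_smul_eq_add_of_forall_ne {J : Type*} [Fintype J] {j : J} {f g : J → ℝ}
    (h : ∀ k, k ≠ j → f k = g k) (ε : J → ℤˣ) :
    ∑ k, ε k • f k = ∑ k, ε k • g k + ε j • (f j - g j) := by
  rw [← sub_eq_iff_eq_add', ← Finset.sum_sub_distrib,
    Finset.sum_eq_single j (fun k _ hk => by rw [h k hk, sub_self]) (by simp), smul_sub]

variable {J ι : Type*} [Fintype J] [DecidableEq J]

/-- The empirical Rademacher complexity `𝔼 ε, sup_i ∑ j, ε j * u i j` (not normalised) of the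
family of vectors `u` is at most `B`. The supremum is expressed through all selectors
`s : (J → ℤˣ) → ι`, so that no junk value arises for unbounded families. -/
def RademacherBound (u : ι → J → ℝ) (B : ℝ) : Prop :=
  ∀ s : (J → ℤˣ) → ι, 𝔼 ε, ∑ j, ε j • u (s ε) j ≤ B

lemma expect_mul_left_eq {G : Type*} [Group G] [Fintype G] (g : G) (f : G → ℝ) :
    𝔼 x, f (g * x) = 𝔼 x, f x :=
  Fintype.expect_equiv (Equiv.mulLeft g) _ _ fun _ => rfl

lemma sum_mulSingle_neg_one_mul_smul (j : J) (ε : J → ℤˣ) (f : J → ℝ) :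
    ∑ k, (Pi.mulSingle j (-1) * ε : J → ℤˣ) k • f k = ∑ k, ε k • f k - 2 * ε j • f j := by
  rw [← Finset.add_sum_erase _ _ (Finset.mem_univ j),
    ← Finset.add_sum_erase _ (fun k => ε k • f k) (Finset.mem_univ j)]
  have off_j : ∀ k ∈ Finset.univ.erase j,
      (Pi.mulSingle j (-1) * ε : J → ℤˣ) k • f k = ε k • f k := fun k hk => by
    simp [Pi.mulSingle_eq_of_ne (Finset.ne_of_mem_erase hk)]
  rw [Finset.sum_congr rfl off_j]
  simp only [Pi.mul_apply, Pi.mulSingle_eq_same, neg_mul, one_mul, Units.neg_smul]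
  ring

lemma expect_smul_mul_smul_of_ne {j k : J} (hjk : j ≠ k) (c : ℝ) :
    𝔼 ε : J → ℤˣ, ε j • ε k • c = 0 := by
  have flip := expect_mul_left_eq (Pi.mulSingle j (-1)) fun ε : J → ℤˣ => ε j • ε k • c
  simp only [Pi.mul_apply, Pi.mulSingle_eq_same, Pi.mulSingle_eq_of_ne hjk.symm, neg_mul, one_mul,
    Units.neg_smul, Finset.expect_neg_distrib] at flip
  linarith

lemma expect_norm_sum_sign_smul_sq {E : Type*} [NormedAddCommGroup E] [InnerProductSpace ℝ E]
    (φ : J → E) : 𝔼 ε : J → ℤˣ, ‖∑ j, ε j • φ j‖ ^ 2 = ∑ j, ‖φ j‖ ^ 2 := by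
  have expand (ε : J → ℤˣ) :
      ‖∑ j, ε j • φ j‖ ^ 2 = ∑ j, ∑ k, ε j • ε k • inner ℝ (φ k) (φ j) := by
    simp only [← real_inner_self_eq_norm_sq, sum_inner, inner_sum, Units.smul_def,
      ← Int.cast_smul_eq_zsmul ℝ, real_inner_smul_left, real_inner_smul_right, smul_eq_mul]
  simp only [expand, Finset.expect_sum_comm]
  refine Finset.sum_congr rfl fun j _ => ?_
  rw [Finset.sum_eq_single j (fun k _ hk => expect_smul_mul_smul_of_ne hk.symm _) (by simp)]
  simp [smul_smul]

lemma expect_norm_sum_sign_smul_le {E : Type*} [NormedAddCommGroup E] [InnerProductSpace ℝ E]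
    {φ : J → E} {b : ℝ} (hb : 0 ≤ b) (hφ : ∀ j, ‖φ j‖ ≤ b) :
    𝔼 ε : J → ℤˣ, ‖∑ j, ε j • φ j‖ ≤ b * √(Fintype.card J) := by
  have jensen := Finset.expect_mul_sq_le_sq_mul_sq Finset.univ
    (fun ε : J → ℤˣ => ‖∑ j, ε j • φ j‖) fun _ => 1
  simp only [mul_one, one_pow, Fintype.expect_const, expect_norm_sum_sign_smul_sq] at jensen
  refine le_of_sq_le_sq ?_ (by positivity)
  calc (𝔼 ε : J → ℤˣ, ‖∑ j, ε j • φ j‖) ^ 2 ≤ ∑ j, ‖φ j‖ ^ 2 := jensen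
    _ ≤ ∑ _j : J, b ^ 2 := by gcongr with j; exact hφ j
    _ = (b * √(Fintype.card J)) ^ 2 := by
      rw [mul_pow, Real.sq_sqrt (Nat.cast_nonneg _)]
      simp [mul_comm]

lemma abs_units_smul (a : ℤˣ) (x : ℝ) : |a • x| = |x| := by
  rcases Int.units_eq_one_or a with rfl | rfl <;> simp

namespace RademacherBound

variable {u v : ι → J → ℝ} {A B : ℝ}

lemma mono (hu : RademacherBound u A) (h : A ≤ B) : RademacherBound u B :=
  fun s => (hu s).trans h

lemma comp {κ : Type*} (hu : RademacherBound u B) (p : κ → ι) :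
    RademacherBound (fun i => u (p i)) B :=
  fun s => hu (p ∘ s)

lemma add (hu : RademacherBound u A) (hv : RademacherBound v B) :
    RademacherBound (fun i j => u i j + v i j) (A + B) := fun s => by
  simpa only [smul_add, Finset.sum_add_distrib, Finset.expect_add_distrib]
    using add_le_add (hu s) (hv s)

lemma neg (hu : RademacherBound u B) : RademacherBound (fun i j => -u i j) B := fun s => by
  rw [← expect_mul_left_eq (-1)]
  simpa using hu fun ε => s (-ε)

lemma const_mul (hu : RademacherBound u B) {c : ℝ} (hc : 0 ≤ c) :
    RademacherBound (fun i j => c * u i j) (c * B) := fun s => by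
  simpa only [mul_smul_comm, Finset.mul_expect, Finset.mul_sum]
    using mul_le_mul_of_nonneg_left (hu s) hc

-- Flipping `ε j` pairs the sign patterns; in each pair the selected indices `i`, `i'` contribute
-- `ε j • (u i j - u i' j)` in coordinate `j`, which `±(v i j - v i' j)` dominates after possibly
-- exchanging `i` and `i'`.
lemma contraction_coordinate (j : J) (hv : RademacherBound v B) (hne : ∀ i k, k ≠ j → u i k = v i k)
    (hj : ∀ i i', |u i j - u i' j| ≤ |v i j - v i' j|) : RademacherBound u B := by
  intro s
  set η : J → ℤˣ := Pi.mulSingle j (-1) with hη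
  have hηη (ε : J → ℤˣ) : η * (η * ε) = ε := by
    rw [← mul_assoc, ← Pi.mulSingle_mul]; simp
  have hηj (ε : J → ℤˣ) : (η * ε) j = -ε j := by simp [hη]
  set s' : (J → ℤˣ) → ι := fun ε =>
    if 0 ≤ ε j • (v (s ε) j - v (s (η * ε)) j) then s ε else s (η * ε) with hs'
  have pair_le (ε : J → ℤˣ) :
      (∑ k, ε k • u (s ε) k) + ∑ k, (η * ε) k • u (s (η * ε)) k ≤
        (∑ k, ε k • v (s' ε) k) + ∑ k, (η * ε) k • v (s' (η * ε)) k := by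
    have hu_le : ε j • (u (s ε) j - u (s (η * ε)) j) ≤
        |ε j • (v (s ε) j - v (s (η * ε)) j)| := by
      refine (le_abs_self _).trans ?_
      simpa only [abs_units_smul] using hj (s ε) (s (η * ε))
    have hv_swap : (-ε j) • (v (s (η * ε)) j - v (s ε) j) =
        ε j • (v (s ε) j - v (s (η * ε)) j) := by
      rw [Units.neg_smul, ← smul_neg, neg_sub]
    simp only [hs', hηη, hηj, hv_swap]
    rw [sum_smul_eq_add_of_forall_ne (hne (s ε)), hη, sum_mulSingle_neg_one_mul_smul,
      sum_smul_eq_add_of_forall_ne (hne (s (η * ε)))]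
    simp only [sum_mulSingle_neg_one_mul_smul, smul_sub] at hu_le ⊢
    split_ifs with h
    · rw [abs_of_nonneg h] at hu_le
      linarith
    · rw [abs_of_neg (not_le.mp h)] at hu_le
      linarith
  have expect_pair_le := Finset.expect_le_expect fun ε (_ : ε ∈ Finset.univ) => pair_le ε
  rw [Finset.expect_add_distrib, Finset.expect_add_distrib,
    expect_mul_left_eq η fun ε => ∑ k, ε k • u (s ε) k,
    expect_mul_left_eq η fun ε => ∑ k, ε k • v (s' ε) k] at expect_pair_le
  linarith [hv s']

lemma contraction (hv : RademacherBound v B)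
    (huv : ∀ i i' j, |u i j - u i' j| ≤ |v i j - v i' j|) : RademacherBound u B := by
  suffices ∀ T : Finset J, RademacherBound (fun i j => if j ∈ T then u i j else v i j) B by
    simpa using this Finset.univ
  intro T
  induction T using Finset.induction_on with
  | empty => simpa using hv
  | insert a T ha ih =>
    refine ih.contraction_coordinate a (fun i k hk => by simp [hk]) fun i i' => ?_
    simpa [ha] using huv i i' a

lemma lipschitz (hv : RademacherBound v B) {L : ℝ} (hL : 0 ≤ L)
    (huv : ∀ i i' j, |u i j - u i' j| ≤ L * |v i j - v i' j|) : RademacherBound u (L * B) :=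
  (hv.const_mul hL).contraction fun i i' j => by
    rw [← mul_sub, abs_mul, abs_of_nonneg hL]
    exact huv i i' j

lemma convexCombination (hu : RademacherBound u B) {κ θ : Type*} [Fintype κ] {w : θ → κ → ℝ}
    (hw : ∀ t l, 0 ≤ w t l) (hw1 : ∀ t, ∑ l, w t l = 1) (p : θ → κ → ι) :
    RademacherBound (fun t j => ∑ l, w t l * u (p t l) j) B := fun s => by
  have exists_le (ε : J → ℤˣ) : ∃ l, ∑ j, ε j • ∑ l, w (s ε) l * u (p (s ε) l) j ≤
      ∑ j, ε j • u (p (s ε) l) j := by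
    by_contra! h
    have := (convex_Iio (𝕜 := ℝ) _).sum_mem (fun l _ => hw (s ε) l) (hw1 (s ε))
      fun l (_ : l ∈ Finset.univ) => Set.mem_Iio.mpr (h l)
    simp only [smul_eq_mul, Finset.mul_sum, Finset.smul_sum, mul_smul_comm, Set.mem_Iio] at this
    rw [Finset.sum_comm] at this
    exact this.false
  choose l hl using exists_le
  exact (Finset.expect_le_expect fun ε _ => hl ε).trans (hu fun ε => p (s ε) (l ε))

lemma of_inner {E : Type*} [NormedAddCommGroup E] [InnerProductSpace ℝ E] {w : ι → E} {φ : J → E}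
    {a b : ℝ} (hw : ∀ i, ‖w i‖ ≤ a) (hb : 0 ≤ b) (hφ : ∀ j, ‖φ j‖ ≤ b) :
    RademacherBound (fun i j => inner ℝ (w i) (φ j)) (a * (b * √(Fintype.card J))) := fun s => by
  have ha : 0 ≤ a := (norm_nonneg _).trans (hw (s 1))
  have selected_le (ε : J → ℤˣ) :
      ∑ j, ε j • inner ℝ (w (s ε)) (φ j) ≤ a * ‖∑ j, ε j • φ j‖ := by
    have : ∑ j, ε j • inner ℝ (w (s ε)) (φ j) = inner ℝ (w (s ε)) (∑ j, ε j • φ j) := by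
      simp only [inner_sum, Units.smul_def, ← Int.cast_smul_eq_zsmul ℝ, real_inner_smul_right,
        smul_eq_mul]
    rw [this]
    exact (real_inner_le_norm _ _).trans (mul_le_mul_of_nonneg_right (hw _) (norm_nonneg _))
  calc 𝔼 ε, ∑ j, ε j • inner ℝ (w (s ε)) (φ j) ≤ 𝔼 ε : J → ℤˣ, a * ‖∑ j, ε j • φ j‖ :=
        Finset.expect_le_expect fun ε _ => selected_le ε
    _ = a * 𝔼 ε : J → ℤˣ, ‖∑ j, ε j • φ j‖ := (Finset.mul_expect _ _ _).symm
    _ ≤ a * (b * √(Fintype.card J)) := by gcongr; exact expect_norm_sum_sign_smul_le hb hφ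

-- With `i₀` fixed, `w * T i = w * (T i - T i₀) + w * T i₀` for the signed sums `T`: the first term
-- is at most `(T i - T i₀)⁺`, and the second belongs to the linear class spanned by `u i₀`.
lemma weight_mul (hu : RademacherBound u B) {w : ι → ℝ} (hw : ∀ i, w i ∈ Set.Icc 0 1) {b : ℝ}
    (hb : 0 ≤ b) (hub : ∀ i j, |u i j| ≤ b) :
    RademacherBound (fun i j => w i * u i j) (B + b * √(Fintype.card J)) := by
  intro s
  set T : ι → (J → ℤˣ) → ℝ := fun i ε => ∑ j, ε j • u i j with hT
  set i₀ := s 1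
  set s' : (J → ℤˣ) → ι := fun ε => if T i₀ ε ≤ T (s ε) ε then s ε else i₀ with hs'
  have selected_le (ε : J → ℤˣ) : ∑ j, ε j • (w (s ε) * u (s ε) j) ≤
      T (s' ε) ε - T i₀ ε + w (s ε) * T i₀ ε := by
    have : ∑ j, ε j • (w (s ε) * u (s ε) j) = w (s ε) * T (s ε) ε := by
      simp only [hT, Finset.mul_sum, mul_smul_comm]
    rw [this]
    simp only [hs']
    split_ifs with h
    · nlinarith [(hw (s ε)).2]
    · nlinarith [(hw (s ε)).1]
  have expect_base : 𝔼 ε, T i₀ ε = 0 := by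
    have flip := expect_mul_left_eq (-1) (T i₀)
    simp only [hT, neg_one_mul, Pi.neg_apply, Units.neg_smul, Finset.sum_neg_distrib,
      Finset.expect_neg_distrib] at flip ⊢
    linarith
  have expect_weight_base : 𝔼 ε, w (s ε) * T i₀ ε ≤ b * √(Fintype.card J) := by
    have := RademacherBound.of_inner (w := w) (a := 1) (φ := u i₀)
      (fun i => by rw [Real.norm_of_nonneg (hw i).1]; exact (hw i).2) hb (hub i₀) s
    simpa only [RCLike.inner_apply, conj_trivial, ← smul_mul_assoc, ← Finset.sum_mul, one_mul,
      mul_comm (w _)] using this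
  calc _ ≤ 𝔼 ε, (T (s' ε) ε - T i₀ ε + w (s ε) * T i₀ ε) :=
        Finset.expect_le_expect fun ε _ => selected_le ε
    _ = 𝔼 ε, T (s' ε) ε + 𝔼 ε, w (s ε) * T i₀ ε := by
        rw [Finset.expect_add_distrib, Finset.expect_sub_distrib, expect_base, sub_zero]
    _ ≤ B + b * √(Fintype.card J) := add_le_add (hu s') expect_weight_base

lemma expect_iSup_le [Nonempty ι] (hu : RademacherBound u B) :
    𝔼 ε : J → ℤˣ, ⨆ i, ∑ j, ε j • u i j ≤ B := by
  refine le_of_forall_pos_le_add fun η hη => ?_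
  have exists_near_sup (ε : J → ℤˣ) : ∃ i, (⨆ i, ∑ j, ε j • u i j) - η < ∑ j, ε j • u i j :=
    exists_lt_of_lt_ciSup (sub_lt_self _ hη)
  choose s hs using exists_near_sup
  have := (Finset.expect_le_expect fun ε (_ : ε ∈ Finset.univ) => (hs ε).le).trans (hu s)
  rwa [Finset.expect_sub_distrib, Fintype.expect_const, sub_le_iff_le_add] at this

end RademacherBound

end Rademacher

section QuadraticForms

variable {E : Type*} [NormedAddCommGroup E] [InnerProductSpace ℝ E] [FiniteDimensional ℝ E]
  {J ι : Type*} [Fintype J] [DecidableEq J] {A : ι → E →L[ℝ] E} {x : J → E} {a R : ℝ}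

-- `⟪A x, x⟫` is the Hilbert–Schmidt inner product of `A` with the rank-one operator `x ⊗ x`, and
-- the Hilbert–Schmidt norm of `A` is at most `√dim * ‖A‖`.
lemma RademacherBound.quadraticForm (hA : ∀ i, ‖A i‖ ≤ a) (hx : ∀ j, ‖x j‖ ≤ R) :
    RademacherBound (fun i j => inner ℝ (A i (x j)) (x j))
      (√(Module.finrank ℝ E) * a * (R ^ 2 * √(Fintype.card J))) := by
  set b := stdOrthonormalBasis ℝ E
  have norm_operator_le (i : ι) :
      ‖WithLp.toLp 2 fun k => A i (b k)‖ ≤ √(Module.finrank ℝ E) * a := by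
    have ha : 0 ≤ a := (norm_nonneg _).trans (hA i)
    have norm_column_le (k) : ‖A i (b k)‖ ≤ a := by
      simpa using (A i).le_of_opNorm_le (hA i) (b k)
    rw [PiLp.norm_eq_of_L2]
    refine Real.sqrt_le_iff.mpr ⟨by positivity, ?_⟩
    calc ∑ k, ‖A i (b k)‖ ^ 2 ≤ ∑ _k : Fin (Module.finrank ℝ E), a ^ 2 := by
          gcongr with k
          exact norm_column_le k
      _ = (√(Module.finrank ℝ E) * a) ^ 2 := by
          rw [mul_pow, Real.sq_sqrt (Nat.cast_nonneg _)]
          simp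
  have norm_rankOne_le (j : J) : ‖WithLp.toLp 2 fun k => inner ℝ (b k) (x j) • x j‖ ≤ R ^ 2 := by
    rw [PiLp.norm_eq_of_L2]
    refine Real.sqrt_le_iff.mpr ⟨by positivity, ?_⟩
    simp only [norm_smul, mul_pow, ← Finset.sum_mul, b.sum_sq_norm_inner_right]
    rw [← sq]
    gcongr
    exact hx j
  have := RademacherBound.of_inner norm_operator_le (sq_nonneg R) norm_rankOne_le
  refine (congrArg (RademacherBound · _) ?_).mp this
  funext i j
  have map_eq : A i (x j) = ∑ k, inner ℝ (b k) (x j) • A i (b k) := by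
    conv_lhs => rw [← b.sum_repr' (x j)]
    simp only [map_sum, map_smul]
  simp only [PiLp.inner_apply, map_eq, sum_inner, real_inner_smul_left, real_inner_smul_right]

lemma RademacherBound.shiftedQuadraticForm [Nontrivial E] {m : ι → E} {ν : ℝ}
    (hA : ∀ i, ‖A i‖ ≤ a) (ha : 0 ≤ a) (hm : ∀ i, ‖m i‖ ≤ ν) (hν : 0 ≤ ν) (hx : ∀ j, ‖x j‖ ≤ R)
    (hR : 0 ≤ R) :
    RademacherBound (fun i j => inner ℝ (A i (x j - m i)) (x j - m i))
      (a * (R + ν) ^ 2 * (√(Module.finrank ℝ E) * √(Fintype.card J))) := by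
  have hAm (i : ι) : ‖A i (m i)‖ ≤ a * ν := (A i).le_of_opNorm_le_of_le (hA i) (hm i)
  have norm_linear_le (i : ι) : ‖-((A i).adjoint (m i) + A i (m i))‖ ≤ 2 * (a * ν) := by
    have := (A i).adjoint.le_of_opNorm_le_of_le
      ((LinearIsometryEquiv.norm_map _ (A i)).trans_le (hA i)) (hm i)
    rw [norm_neg, two_mul]
    exact (norm_add_le _ _).trans (add_le_add this (hAm i))
  have abs_constant_le (i : ι) : ‖inner ℝ (A i (m i)) (m i)‖ ≤ a * ν * ν :=
    (norm_inner_le_norm _ _).trans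
      (mul_le_mul (hAm i) (hm i) (norm_nonneg _) (by positivity))
  have one_le_sqrt_dim : 1 ≤ √(Module.finrank ℝ E) :=
    Real.one_le_sqrt.mpr (by exact_mod_cast Module.finrank_pos)
  have sum_bound := ((RademacherBound.quadraticForm hA hx).add
    (RademacherBound.of_inner norm_linear_le hR hx)).add
      (RademacherBound.of_inner abs_constant_le zero_le_one fun _ : J => norm_one.le)
  refine RademacherBound.mono ((congrArg (RademacherBound · _) ?_).mp sum_bound) ?_
  · funext i j
    simp only [map_sub, inner_sub_left, inner_sub_right, inner_neg_left, inner_add_left,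
      ContinuousLinearMap.adjoint_inner_left, RCLike.inner_apply, conj_trivial, one_mul,
      real_inner_comm (A i (x j)) (m i)]
    ring
  · calc _ = (√(Module.finrank ℝ E) * R ^ 2 + 1 * (2 * R * ν + ν ^ 2)) *
            (a * √(Fintype.card J)) := by ring
      _ ≤ (√(Module.finrank ℝ E) * R ^ 2 + √(Module.finrank ℝ E) * (2 * R * ν + ν ^ 2)) *
            (a * √(Fintype.card J)) := by gcongr
      _ = _ := by ring

end QuadraticForms

section Softmax

lemma exp_sub_exp_le_mul_abs_sub {a b c : ℝ} (ha : a ≤ c) :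
    Real.exp a - Real.exp b ≤ Real.exp c * |a - b| := by
  have tangent : Real.exp a - Real.exp b ≤ Real.exp a * (a - b) := by
    have := mul_le_mul_of_nonneg_left (Real.add_one_le_exp (b - a)) (Real.exp_pos a).le
    rw [← Real.exp_add, add_sub_cancel] at this
    linarith
  calc Real.exp a - Real.exp b ≤ Real.exp a * |a - b| :=
        tangent.trans (mul_le_mul_of_nonneg_left (le_abs_self _) (Real.exp_pos a).le)
    _ ≤ Real.exp c * |a - b| := by gcongr

lemma abs_exp_sub_exp_le {a b c : ℝ} (ha : a ≤ c) (hb : b ≤ c) :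
    |Real.exp a - Real.exp b| ≤ Real.exp c * |a - b| :=
  abs_sub_le_iff.mpr ⟨exp_sub_exp_le_mul_abs_sub ha,
    abs_sub_comm a b ▸ exp_sub_exp_le_mul_abs_sub hb⟩

lemma log_sub_log_le_mul_abs_sub {a b c : ℝ} (hc : 0 < c) (ha : 0 < a) (hb : c ≤ b) :
    Real.log a - Real.log b ≤ c⁻¹ * |a - b| := by
  have hb' := hc.trans_le hb
  calc Real.log a - Real.log b = Real.log (a / b) := (Real.log_div ha.ne' hb'.ne').symm
    _ ≤ a / b - 1 := Real.log_le_sub_one_of_pos (div_pos ha hb')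
    _ = b⁻¹ * (a - b) := by field_simp
    _ ≤ b⁻¹ * |a - b| := by gcongr; exact le_abs_self _
    _ ≤ c⁻¹ * |a - b| := by gcongr

lemma abs_log_sub_log_le {a b c : ℝ} (hc : 0 < c) (ha : c ≤ a) (hb : c ≤ b) :
    |Real.log a - Real.log b| ≤ c⁻¹ * |a - b| :=
  abs_sub_le_iff.mpr ⟨log_sub_log_le_mul_abs_sub hc (hc.trans_le ha) hb,
    abs_sub_comm a b ▸ log_sub_log_le_mul_abs_sub hc (hc.trans_le hb) ha⟩

variable {J ι κ θ : Type*} [Fintype J] [DecidableEq J] [Fintype κ] {q : ι → J → ℝ} {B M : ℝ}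

-- A softmax value is `w k * exp (q k - log (∑ l, w l * exp (q l)))`; the sum is a convex
-- combination, so the number of classes does not enter the bound.
lemma RademacherBound.softmax_of_sum_eq_one (hq : RademacherBound q B)
    (hqM : ∀ i j, q i j ∈ Set.Icc (-M) 0) {w : θ → κ → ℝ} (hw : ∀ t l, 0 ≤ w t l)
    (hw1 : ∀ t, ∑ l, w t l = 1) (p : θ → κ → ι) (k : θ → κ) :
    RademacherBound
      (fun t j => w t (k t) * Real.exp (q (p t (k t)) j) / ∑ l, w t l * Real.exp (q (p t l) j))
      (Real.exp M * (1 + Real.exp M) * B + Real.exp M * √(Fintype.card J)) := by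
  set Z : θ → J → ℝ := fun t j => ∑ l, w t l * Real.exp (q (p t l) j)
  have Z_mem (t j) : Z t j ∈ Set.Icc (Real.exp (-M)) 1 :=
    (convex_Icc _ _).sum_mem (fun l _ => hw t l) (hw1 t) fun l _ =>
      ⟨Real.exp_le_exp.mpr (hqM _ j).1, Real.exp_le_one_iff.mpr (hqM _ j).2⟩
  have Z_pos (t j) : 0 < Z t j := (Real.exp_pos _).trans_le (Z_mem t j).1
  have bound_exp : RademacherBound (fun i j => Real.exp (q i j)) B :=
    hq.contraction fun i i' j => by simpa using abs_exp_sub_exp_le (hqM i j).2 (hqM i' j).2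
  have bound_Z : RademacherBound Z B := bound_exp.convexCombination hw hw1 p
  have bound_log_Z : RademacherBound (fun t j => Real.log (Z t j)) (Real.exp M * B) := by
    refine bound_Z.lipschitz (Real.exp_pos M).le fun t t' j => ?_
    simpa [Real.exp_neg] using
      abs_log_sub_log_le (Real.exp_pos (-M)) (Z_mem t j).1 (Z_mem t' j).1
  have exponent_le (t j) : q (p t (k t)) j + -Real.log (Z t j) ≤ M := by
    have := (Real.le_log_iff_exp_le (Z_pos t j)).mpr (Z_mem t j).1
    linarith [(hqM (p t (k t)) j).2]
  have bound_exponential : RademacherBound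
      (fun t j => Real.exp (q (p t (k t)) j + -Real.log (Z t j)))
      (Real.exp M * (B + Real.exp M * B)) :=
    ((hq.comp fun t => p t (k t)).add bound_log_Z.neg).lipschitz (Real.exp_pos M).le
      fun t t' j => abs_exp_sub_exp_le (exponent_le t j) (exponent_le t' j)
  have bound_weighted := bound_exponential.weight_mul (w := fun t => w t (k t))
    (fun t => ⟨hw t _, hw1 t ▸ Finset.single_le_sum (fun l _ => hw t l) (Finset.mem_univ (k t))⟩)
    (Real.exp_pos M).le fun t j => by
      rw [Real.abs_exp]
      exact Real.exp_le_exp.mpr (exponent_le t j)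
  refine RademacherBound.mono ((congrArg (RademacherBound · _) ?_).mp bound_weighted)
    (le_of_eq (by ring))
  funext t j
  rw [Real.exp_add, Real.exp_neg, Real.exp_log (Z_pos t j), mul_div_assoc, div_eq_mul_inv]

lemma RademacherBound.softmax (hq : RademacherBound q B)
    (hqM : ∀ i j, q i j ∈ Set.Icc (-M) 0) {w : θ → κ → ℝ} (hw : ∀ t l, 0 < w t l)
    (p : θ → κ → ι) (k : θ → κ) :
    RademacherBound
      (fun t j => w t (k t) * Real.exp (q (p t (k t)) j) / ∑ l, w t l * Real.exp (q (p t l) j))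
      (Real.exp M * (1 + Real.exp M) * B + Real.exp M * √(Fintype.card J)) := by
  have sum_pos (t : θ) : 0 < ∑ l, w t l :=
    Finset.sum_pos (fun l _ => hw t l) ⟨k t, Finset.mem_univ _⟩
  have normalized := RademacherBound.softmax_of_sum_eq_one hq hqM
    (w := fun t l => w t l / ∑ l, w t l) (fun t l => div_nonneg (hw t l).le (sum_pos t).le)
    (fun t => by rw [← Finset.sum_div, div_self (sum_pos t).ne']) p k
  refine (congrArg (RademacherBound · _) ?_).mp normalized
  funext t j
  simp only [div_mul_eq_mul_div, ← Finset.sum_div]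
  exact div_div_div_cancel_right₀ (sum_pos t).ne' _ _

end Softmax

section Responsibilities

variable {d K : ℕ}

lemma sum_mul_mul_eq_inner_toEuclideanCLM (S : Matrix (Fin d) (Fin d) ℝ)
    (v : EuclideanSpace ℝ (Fin d)) :
    ∑ i, ∑ j, v i * S i j * v j = inner ℝ v (Matrix.toEuclideanCLM (𝕜 := ℝ) S v) := by
  simp only [Matrix.inner_toEuclideanCLM, dotProduct, Matrix.mulVec, Finset.mul_sum, mul_assoc]

namespace inPhi

variable {ξ ζ ν : ℝ} {π : Fin K → ℝ} {μ : Fin K → EuclideanSpace ℝ (Fin d)}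
  {S : Fin K → Matrix (Fin d) (Fin d) ℝ}

lemma weight_pos (h : inPhi ξ ζ ν π μ S) (k : Fin K) : 0 < π k := h.1 k

lemma norm_mean_le (h : inPhi ξ ζ ν π μ S) (k : Fin K) : ‖μ k‖ ≤ ν := h.2.2.2.1 k

lemma coercive (h : inPhi ξ ζ ν π μ S) (k : Fin K) (v : EuclideanSpace ℝ (Fin d)) :
    ζ * ‖v‖ ^ 2 ≤ inner ℝ v (Matrix.toEuclideanCLM (𝕜 := ℝ) (S k) v) := by
  rcases eq_or_ne v 0 with rfl | hv
  · simp
  · rw [← sum_mul_mul_eq_inner_toEuclideanCLM]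
    exact ((h.2.2.2.2 k).2 v hv).1.le

lemma posDef (h : inPhi ξ ζ ν π μ S) (hζ : 0 < ζ) (k : Fin K) : (S k).PosDef := by
  refine .of_dotProduct_mulVec_pos ?_ fun v hv => ?_
  · rw [Matrix.IsHermitian, Matrix.conjTranspose_eq_transpose_of_trivial]
    exact (h.2.2.2.2 k).1
  · have hv' : 0 < ‖WithLp.toLp 2 v‖ := norm_pos_iff.mpr (by simpa using hv)
    have := h.coercive k (WithLp.toLp 2 v)
    rw [Matrix.inner_toEuclideanCLM] at this
    simpa only [star_trivial] using (show 0 < ζ * ‖WithLp.toLp 2 v‖ ^ 2 by positivity).trans_le this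

-- Apply coercivity of `S k` to the vector `(S k)⁻¹ v`.
lemma coercive_inv (h : inPhi ξ ζ ν π μ S) (hζ : 0 < ζ) (k : Fin K)
    (v : EuclideanSpace ℝ (Fin d)) :
    ζ * ‖Matrix.toEuclideanCLM (𝕜 := ℝ) (S k)⁻¹ v‖ ^ 2 ≤
      inner ℝ (Matrix.toEuclideanCLM (𝕜 := ℝ) (S k)⁻¹ v) v := by
  have inv_apply : Matrix.toEuclideanCLM (𝕜 := ℝ) (S k)
      (Matrix.toEuclideanCLM (𝕜 := ℝ) (S k)⁻¹ v) = v := by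
    rw [← mul_apply_eq_comp, ← map_mul,
      Matrix.mul_nonsing_inv _ (h.posDef hζ k).det_pos.ne'.isUnit, map_one,
      one_apply_eq_self]
  simpa only [inv_apply] using h.coercive k (Matrix.toEuclideanCLM (𝕜 := ℝ) (S k)⁻¹ v)

lemma norm_inv_le (h : inPhi ξ ζ ν π μ S) (hζ : 0 < ζ) (k : Fin K) :
    ‖Matrix.toEuclideanCLM (𝕜 := ℝ) (S k)⁻¹‖ ≤ ζ⁻¹ := by
  refine ContinuousLinearMap.opNorm_le_bound _ (by positivity) fun v => ?_
  have le_mul := (h.coercive_inv hζ k v).trans (real_inner_le_norm _ _)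
  rw [inv_mul_eq_div, le_div_iff₀ hζ]
  rcases (norm_nonneg (Matrix.toEuclideanCLM (𝕜 := ℝ) (S k)⁻¹ v)).eq_or_lt with h0 | hpos
  · simp [← h0]
  · nlinarith

end inPhi

/-- The exponent of the Gaussian density with mean `μ` and covariance `S` at `x`. -/
noncomputable def gaussExponent (x μ : EuclideanSpace ℝ (Fin d))
    (S : Matrix (Fin d) (Fin d) ℝ) : ℝ :=
  -(1 / 2 * inner ℝ (Matrix.toEuclideanCLM (𝕜 := ℝ) S⁻¹ (x - μ)) (x - μ))

/-- The factor of the Gaussian density with covariance `S` that does not depend on the point. -/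
noncomputable def gaussPrefactor (S : Matrix (Fin d) (Fin d) ℝ) : ℝ :=
  (2 * Real.pi) ^ (-(d : ℝ) / 2) * S.det ^ (-(1 : ℝ) / 2)

lemma gaussDensity_eq_mul_exp (x μ : EuclideanSpace ℝ (Fin d)) (S : Matrix (Fin d) (Fin d) ℝ) :
    gaussDensity x μ S = gaussPrefactor S * Real.exp (gaussExponent x μ S) := by
  rw [gaussDensity, gaussPrefactor, gaussExponent, sum_mul_mul_eq_inner_toEuclideanCLM,
    real_inner_comm]
  ring_nf

lemma resp_eq_softmax (π : Fin K → ℝ) (μ : Fin K → EuclideanSpace ℝ (Fin d))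
    (S : Fin K → Matrix (Fin d) (Fin d) ℝ) (k : Fin K) (x : EuclideanSpace ℝ (Fin d)) :
    resp π μ S k x = π k * gaussPrefactor (S k) * Real.exp (gaussExponent x (μ k) (S k)) /
      ∑ l, π l * gaussPrefactor (S l) * Real.exp (gaussExponent x (μ l) (S l)) := by
  simp only [resp, gaussDensity_eq_mul_exp, mul_assoc]

lemma gaussPrefactor_pos {S : Matrix (Fin d) (Fin d) ℝ} (hS : S.PosDef) :
    0 < gaussPrefactor S :=
  mul_pos (Real.rpow_pos_of_pos (by positivity) _) (Real.rpow_pos_of_pos hS.det_pos _)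

namespace inPhi

variable {ξ ζ ν R : ℝ} {π : Fin K → ℝ} {μ : Fin K → EuclideanSpace ℝ (Fin d)}
  {S : Fin K → Matrix (Fin d) (Fin d) ℝ}

lemma mixture_term_pos (h : inPhi ξ ζ ν π μ S) (hζ : 0 < ζ) (k : Fin K)
    (x : EuclideanSpace ℝ (Fin d)) :
    0 < π k * gaussDensity x (μ k) (S k) := by
  rw [gaussDensity_eq_mul_exp]
  exact mul_pos (h.weight_pos k)
    (mul_pos (gaussPrefactor_pos (h.posDef hζ k)) (Real.exp_pos _))

lemma resp_mem_Icc (h : inPhi ξ ζ ν π μ S) (hζ : 0 < ζ) (k : Fin K)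
    (x : EuclideanSpace ℝ (Fin d)) :
    resp π μ S k x ∈ Set.Icc 0 1 := by
  have term_nonneg (l : Fin K) := (h.mixture_term_pos hζ l x).le
  have sum_nonneg := Finset.sum_nonneg fun l (_ : l ∈ Finset.univ) => term_nonneg l
  exact ⟨div_nonneg (term_nonneg k) sum_nonneg, div_le_one_of_le₀
    (Finset.single_le_sum (fun l _ => term_nonneg l) (Finset.mem_univ k)) sum_nonneg⟩

lemma continuous_resp (h : inPhi ξ ζ ν π μ S) (hζ : 0 < ζ) (k : Fin K) :
    Continuous (resp π μ S k) := by
  have continuous_density (l : Fin K) : Continuous fun x => gaussDensity x (μ l) (S l) := by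
    simp only [gaussDensity_eq_mul_exp, gaussExponent]
    fun_prop
  refine .div (by fun_prop) (by fun_prop) fun x => ?_
  exact (Finset.sum_pos (fun l _ => h.mixture_term_pos hζ l x) ⟨k, Finset.mem_univ k⟩).ne'

lemma gaussExponent_mem_Icc (h : inPhi ξ ζ ν π μ S) (hζ : 0 < ζ) (k : Fin K)
    {x : EuclideanSpace ℝ (Fin d)} (hx : ‖x‖ ≤ R) :
    gaussExponent x (μ k) (S k) ∈ Set.Icc (-((R + ν) ^ 2 / (2 * ζ))) 0 := by
  have inner_nonneg : 0 ≤ inner ℝ (Matrix.toEuclideanCLM (𝕜 := ℝ) (S k)⁻¹ (x - μ k)) (x - μ k) :=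
    le_trans (by positivity) (h.coercive_inv hζ k (x - μ k))
  have norm_sub_le : ‖x - μ k‖ ≤ R + ν :=
    (norm_sub_le _ _).trans (add_le_add hx (h.norm_mean_le k))
  have inner_le : inner ℝ (Matrix.toEuclideanCLM (𝕜 := ℝ) (S k)⁻¹ (x - μ k)) (x - μ k) ≤
      ζ⁻¹ * (R + ν) * (R + ν) := by
    refine (real_inner_le_norm _ _).trans (mul_le_mul ?_ norm_sub_le (norm_nonneg _) ?_)
    · exact ContinuousLinearMap.le_of_opNorm_le_of_le _ (h.norm_inv_le hζ k) norm_sub_le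
    · exact mul_nonneg (by positivity) ((norm_nonneg _).trans norm_sub_le)
  have bound_eq : (R + ν) ^ 2 / (2 * ζ) = 1 / 2 * (ζ⁻¹ * (R + ν) * (R + ν)) := by
    field_simp
  rw [gaussExponent, bound_eq]
  constructor <;> linarith

end inPhi

/-- The constant `C` of the generalization bound. Its parameters bound the covariances from below,
the means and the data; `M` bounds the exponents of the Gaussian densities. -/
noncomputable def respComplexity (ζ ν R : ℝ) : ℝ :=
  let M := (R + ν) ^ 2 / (2 * ζ)
  Real.exp M * (1 + Real.exp M) * M + Real.exp M

lemma respComplexity_pos {ζ : ℝ} (hζ : 0 < ζ) (ν R : ℝ) : 0 < respComplexity ζ ν R := by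
  unfold respComplexity
  positivity

lemma rademacherBound_resp {ι J : Type*} [Fintype J] [DecidableEq J] {ξ ζ ν R : ℝ} (hζ : 0 < ζ)
    (hν : 0 ≤ ν) (hR : 0 ≤ R) (hd : d ≠ 0) {π : ι → Fin K → ℝ}
    {μ : ι → Fin K → EuclideanSpace ℝ (Fin d)} {S : ι → Fin K → Matrix (Fin d) (Fin d) ℝ}
    (hΦ : ∀ i, inPhi ξ ζ ν (π i) (μ i) (S i)) (k : ι → Fin K)
    {x : J → EuclideanSpace ℝ (Fin d)} (hx : ∀ j, ‖x j‖ ≤ R) :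
    RademacherBound (fun i j => resp (π i) (μ i) (S i) (k i) (x j))
      (respComplexity ζ ν R * (√d * √(Fintype.card J))) := by
  have : NeZero d := ⟨hd⟩
  have bound_exponent : RademacherBound
      (fun (p : ι × Fin K) j => gaussExponent (x j) (μ p.1 p.2) (S p.1 p.2))
      ((R + ν) ^ 2 / (2 * ζ) * (√d * √(Fintype.card J))) := by
    have bound_form := RademacherBound.shiftedQuadraticForm
      (A := fun p : ι × Fin K => Matrix.toEuclideanCLM (𝕜 := ℝ) (S p.1 p.2)⁻¹)
      (m := fun p => μ p.1 p.2) (fun p => (hΦ p.1).norm_inv_le hζ p.2) (by positivity)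
      (fun p => (hΦ p.1).norm_mean_le p.2) hν hx hR
    rw [finrank_euclideanSpace_fin] at bound_form
    refine (bound_form.const_mul one_half_pos.le).neg.mono (le_of_eq ?_)
    field_simp
  have bound_softmax := bound_exponent.softmax
    (fun p j => (hΦ p.1).gaussExponent_mem_Icc hζ p.2 (hx j))
    (w := fun i l => π i l * gaussPrefactor (S i l))
    (fun i l => mul_pos ((hΦ i).weight_pos l) (gaussPrefactor_pos ((hΦ i).posDef hζ l)))
    Prod.mk k
  simp only [← resp_eq_softmax] at bound_softmax
  refine bound_softmax.mono ?_
  have one_le_sqrt_d : 1 ≤ √(d : ℝ) :=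
    Real.one_le_sqrt.mpr (by exact_mod_cast Nat.one_le_iff_ne_zero.mpr hd)
  have sqrt_card_le : √(Fintype.card J) ≤ √d * √(Fintype.card J) :=
    le_mul_of_one_le_left (Real.sqrt_nonneg _) one_le_sqrt_d
  rw [respComplexity, add_mul, ← mul_assoc (Real.exp _ * (1 + Real.exp _))]
  gcongr

end Responsibilities

section BoundedDifferences

open ProbabilityTheory
open scoped NNReal

lemma hasSubgaussianMGF_sub_integral_of_abs_sub_le {Ω : Type*} [MeasurableSpace Ω]
    {P : Measure Ω} [IsProbabilityMeasure P] {f : Ω → ℝ} (hf : AEMeasurable f P) {c : ℝ≥0}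
    (hc : ∀ x y, |f x - f y| ≤ c) :
    HasSubgaussianMGF (fun x => f x - ∫ y, f y ∂P) ((c / 2) ^ 2) P := by
  obtain ⟨x₀⟩ := nonempty_of_isProbabilityMeasure P
  have le_add (x y : Ω) : f x ≤ f y + c := by linarith [(abs_le.mp (hc x y)).2]
  have bddBelow : BddBelow (Set.range f) :=
    ⟨f x₀ - c, Set.forall_mem_range.mpr fun x => sub_le_iff_le_add.mpr (le_add x₀ x)⟩
  have le_iInf_add (x : Ω) : f x ≤ (⨅ y, f y) + c := by
    have : Nonempty Ω := ⟨x₀⟩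
    exact sub_le_iff_le_add.mp (le_ciInf fun y => sub_le_iff_le_add.mpr (le_add x y))
  simpa using hasSubgaussianMGF_of_mem_Icc hf
    (ae_of_all _ fun x => ⟨ciInf_le bddBelow x, le_iInf_add x⟩)

lemma hasSubgaussianMGF_prod {α β : Type*} [MeasurableSpace α] [MeasurableSpace β]
    {P : Measure α} {Q : Measure β} [IsProbabilityMeasure P] [IsProbabilityMeasure Q]
    {G : α × β → ℝ} (hG : Measurable G) {b : ℝ} (hGb : ∀ p, |G p| ≤ b) {c c' : ℝ≥0}
    (hfst : HasSubgaussianMGF (fun x => ∫ y, G (x, y) ∂Q - ∫ p, G p ∂P.prod Q) c P)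
    (hsnd : ∀ x, HasSubgaussianMGF (fun y => G (x, y) - ∫ y, G (x, y) ∂Q) c' Q) :
    HasSubgaussianMGF (fun p => G p - ∫ p, G p ∂P.prod Q) (c + c') (P.prod Q) := by
  set m := ∫ p, G p ∂P.prod Q
  set g : α → ℝ := fun x => ∫ y, G (x, y) ∂Q
  have integrable_exp (t : ℝ) : Integrable (fun p => Real.exp (t * (G p - m))) (P.prod Q) := by
    refine .of_bound (by fun_prop) (Real.exp (|t| * (b + |m|))) (ae_of_all _ fun p => ?_)
    rw [Real.norm_eq_abs, Real.abs_exp, Real.exp_le_exp]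
    calc t * (G p - m) ≤ |t| * |G p - m| := (le_abs_self _).trans (abs_mul _ _).le
      _ ≤ |t| * (b + |m|) := by gcongr; exact (abs_sub _ _).trans (by gcongr; exact hGb p)
  refine ⟨integrable_exp, fun t => ?_⟩
  calc mgf (fun p => G p - m) (P.prod Q) t
      = ∫ x, ∫ y, Real.exp (t * (G (x, y) - m)) ∂Q ∂P := integral_prod _ (integrable_exp t)
    _ = ∫ x, Real.exp (t * (g x - m)) * mgf (fun y => G (x, y) - g x) Q t ∂P := by
        simp only [mgf, ← integral_const_mul, ← Real.exp_add, ← mul_add, sub_add_sub_cancel']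
    _ ≤ ∫ x, Real.exp (t * (g x - m)) * Real.exp (c' * t ^ 2 / 2) ∂P := by
        refine integral_mono_of_nonneg (ae_of_all _ fun x => ?_)
          ((hfst.integrable_exp_mul t).mul_const _) (ae_of_all _ fun x => ?_)
        · exact mul_nonneg (Real.exp_pos _).le mgf_nonneg
        · exact mul_le_mul_of_nonneg_left ((hsnd x).mgf_le t) (Real.exp_pos _).le
    _ = mgf (fun x => g x - m) P t * Real.exp (c' * t ^ 2 / 2) := integral_mul_const _ _
    _ ≤ Real.exp (c * t ^ 2 / 2) * Real.exp (c' * t ^ 2 / 2) := by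
        gcongr
        exact hfst.mgf_le t
    _ = Real.exp ((c + c' : ℝ≥0) * t ^ 2 / 2) := by
        rw [← Real.exp_add, NNReal.coe_add]
        ring_nf

lemma hasSubgaussianMGF_prod_of_abs_sub_le {α β : Type*} [MeasurableSpace α] [MeasurableSpace β]
    {P : Measure α} {Q : Measure β} [IsProbabilityMeasure P] [IsProbabilityMeasure Q]
    {G : α × β → ℝ} (hG : Measurable G) {b : ℝ} (hGb : ∀ p, |G p| ≤ b) {c c' : ℝ≥0}
    (hc : ∀ x x' y, |G (x, y) - G (x', y)| ≤ c)
    (hsnd : ∀ x, HasSubgaussianMGF (fun y => G (x, y) - ∫ y, G (x, y) ∂Q) c' Q) :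
    HasSubgaussianMGF (fun p => G p - ∫ p, G p ∂P.prod Q) ((c / 2) ^ 2 + c') (P.prod Q) := by
  have integrable_section (x) : Integrable (fun y => G (x, y)) Q :=
    .of_bound (hG.comp measurable_prodMk_left).aestronglyMeasurable b
      (ae_of_all _ fun y => hGb (x, y))
  have hfst := hasSubgaussianMGF_sub_integral_of_abs_sub_le (P := P) (c := c)
    (f := fun x => ∫ y, G (x, y) ∂Q)
    hG.stronglyMeasurable.integral_prod_right'.measurable.aemeasurable fun x x' => by
      rw [← integral_sub (integrable_section x) (integrable_section x')]
      simpa using norm_integral_le_of_norm_le_const (f := fun y => G (x, y) - G (x', y))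
        (ae_of_all Q (hc x x'))
  rw [← integral_prod G (.of_bound hG.aestronglyMeasurable b (ae_of_all _ hGb))] at hfst
  exact hasSubgaussianMGF_prod hG hGb hfst hsnd

lemma abs_piecewise_sub_le_sum {ι : Type*} [DecidableEq ι] {X : ι → Type*} {F : (∀ i, X i) → ℝ}
    {c : ι → ℝ≥0} (hc : ∀ ω i a, |F (Function.update ω i a) - F ω| ≤ c i) (ω ω' : ∀ i, X i)
    (T : Finset ι) : |F (T.piecewise ω' ω) - F ω| ≤ ∑ i ∈ T, c i := by
  induction T using Finset.induction_on with
  | empty => simp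
  | insert i T hi ih =>
    rw [Finset.piecewise_insert, Finset.sum_insert hi]
    refine (abs_sub_le _ (F (T.piecewise ω' ω)) _).trans ?_
    push_cast at ih ⊢
    exact add_le_add (hc _ i _) ih

lemma abs_sub_le_sum {ι : Type*} [Fintype ι] [DecidableEq ι] {X : ι → Type*}
    {F : (∀ i, X i) → ℝ} {c : ι → ℝ≥0}
    (hc : ∀ ω i a, |F (Function.update ω i a) - F ω| ≤ c i) (ω ω' : ∀ i, X i) :
    |F ω' - F ω| ≤ ∑ i, c i := by
  simpa using abs_piecewise_sub_le_sum hc ω ω' Finset.univ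

-- McDiarmid's inequality, by conditioning on one coordinate at a time.
theorem hasSubgaussianMGF_of_bounded_differences {n : ℕ} {X : Fin n → Type*}
    [∀ i, MeasurableSpace (X i)] (P : ∀ i, Measure (X i)) [∀ i, IsProbabilityMeasure (P i)]
    {F : (∀ i, X i) → ℝ} (hF : Measurable F) {c : Fin n → ℝ≥0}
    (hc : ∀ ω i a, |F (Function.update ω i a) - F ω| ≤ c i) :
    HasSubgaussianMGF (fun ω => F ω - ∫ ω, F ω ∂Measure.pi P) (∑ i, (c i / 2) ^ 2)
      (Measure.pi P) := by
  induction n with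
  | zero =>
    have F_eq : F = fun _ => F isEmptyElim := funext fun ω => by rw [Subsingleton.elim ω]
    rw [F_eq]
    simp
  | succ n ih =>
    set e := MeasurableEquiv.piFinSuccAbove X 0
    set Q := Measure.pi fun i => P (Fin.succAbove 0 i)
    set G : X 0 × (∀ i, X (Fin.succAbove 0 i)) → ℝ := fun p => F (Fin.insertNth 0 p.1 p.2)
    have he : MeasurePreserving e (Measure.pi P) ((P 0).prod Q) :=
      measurePreserving_piFinSuccAbove P 0
    have G_e (ω) : G (e ω) = F ω := congrArg F (Fin.insertNth_self_removeNth 0 ω)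
    have measurable_G : Measurable G := hF.comp e.symm.measurable
    obtain ⟨ω₀⟩ := nonempty_of_isProbabilityMeasure (Measure.pi P)
    have abs_G_le (p) : |G p| ≤ |F ω₀| + ∑ i, c i := by
      linarith [abs_sub_abs_le_abs_sub (G p) (F ω₀), abs_sub_le_sum hc ω₀ (Fin.insertNth 0 p.1 p.2)]
    have abs_section_sub_le (x x' y) : |G (x, y) - G (x', y)| ≤ c 0 := by
      simpa only [G, Fin.update_insertNth] using hc (Fin.insertNth 0 x' y) 0 x
    have hprod := hasSubgaussianMGF_prod_of_abs_sub_le measurable_G abs_G_le abs_section_sub_le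
      (P := P 0) fun x => ih (fun i => P (Fin.succAbove 0 i)) (F := fun y => G (x, y))
        (c := fun i => c (Fin.succAbove 0 i)) (by fun_prop) fun y i a => by
          simpa only [G, Fin.insertNth_update] using hc (Fin.insertNth 0 x y) (Fin.succAbove 0 i) a
    rw [← he.map_eq, integral_map_equiv] at hprod
    rw [Fin.sum_univ_succAbove _ 0]
    simpa only [Function.comp_def, G_e] using hprod.of_map he.measurable.aemeasurable

end BoundedDifferences

section Symmetrization

open scoped BigOperators

lemma abs_ciSup_sub_ciSup_le {ι : Type*} [Nonempty ι] {f g : ι → ℝ}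
    (hf : BddAbove (Set.range f)) (hg : BddAbove (Set.range g)) {c : ℝ}
    (h : ∀ i, |f i - g i| ≤ c) : |(⨆ i, f i) - ⨆ i, g i| ≤ c := by
  rw [abs_sub_le_iff, sub_le_iff_le_add, sub_le_iff_le_add]
  constructor
  · exact ciSup_le fun i => by linarith [le_ciSup hg i, (abs_le.mp (h i)).2]
  · exact ciSup_le fun i => by linarith [le_ciSup hf i, (abs_le.mp (h i)).1]

lemma abs_ciSup_le {ι : Type*} [Nonempty ι] {f : ι → ℝ} {c : ℝ} (h : ∀ i, |f i| ≤ c) :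
    |⨆ i, f i| ≤ c := by
  have bddAbove : BddAbove (Set.range f) :=
    ⟨c, Set.forall_mem_range.mpr fun i => (le_abs_self _).trans (h i)⟩
  simpa using abs_ciSup_sub_ciSup_le (g := fun _ => 0) bddAbove ⟨0, by simp⟩ (by simpa using h)

variable {α ι J : Type*} [MeasurableSpace α] [Fintype J]

lemma measurePreserving_piecewise_swap [DecidableEq J] (P : Measure α) [IsProbabilityMeasure P]
    (T : Finset J) :
    MeasurePreserving (fun p : (J → α) × (J → α) => (T.piecewise p.1 p.2, T.piecewise p.2 p.1))
      ((Measure.pi fun _ => P).prod (Measure.pi fun _ => P))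
      ((Measure.pi fun _ => P).prod (Measure.pi fun _ => P)) := by
  have pairing := measurePreserving_arrowProdEquivProdArrow α α J (fun _ => P) fun _ => P
  have swap_off_T := measurePreserving_pi (fun _ : J => P.prod P) (fun _ => P.prod P)
    (f := fun j => if j ∈ T then id else Prod.swap) fun j => by
      split_ifs
      exacts [.id _, Measure.measurePreserving_swap]
  convert (pairing.comp swap_off_T).comp (pairing.symm _) using 1
  funext p
  ext j <;> by_cases hj : j ∈ T <;>
    simp [hj, MeasurableEquiv.arrowProdEquivProdArrow, Equiv.arrowProdEquivProdArrow]

variable {P : Measure α} [IsProbabilityMeasure P] {f : ι → α → ℝ} {c : ℝ}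

lemma integral_iSup_sum_smul_sub_eq [Countable ι] (hf : ∀ i, Measurable (f i)) (ε : J → ℤˣ) :
    ∫ p, ⨆ i, ∑ j, ε j • (f i (p.2 j) - f i (p.1 j))
        ∂(Measure.pi fun _ : J => P).prod (Measure.pi fun _ => P) =
      ∫ p, ⨆ i, ∑ j, (f i (p.2 j) - f i (p.1 j))
        ∂(Measure.pi fun _ : J => P).prod (Measure.pi fun _ => P) := by
  classical
  have swap := measurePreserving_piecewise_swap P (Finset.univ.filter fun j => ε j = 1)
  conv_rhs => rw [← swap.map_eq]
  rw [integral_map swap.measurable.aemeasurable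
    (Measurable.iSup fun i => by fun_prop).aestronglyMeasurable]
  congr! 5 with p i j
  rcases Int.units_eq_one_or (ε j) with hj | hj <;> simp [hj]

lemma integral_iSup_sum_sub_le [DecidableEq J] [Countable ι] [Nonempty ι]
    (hf : ∀ i, Measurable (f i)) (hc : ∀ i x y, |f i x - f i y| ≤ c) {B : ℝ}
    (hB : ∀ᵐ ω ∂Measure.pi fun _ : J => P, RademacherBound (fun i j => f i (ω j)) B) :
    ∫ p, ⨆ i, ∑ j, (f i (p.2 j) - f i (p.1 j))
      ∂(Measure.pi fun _ : J => P).prod (Measure.pi fun _ => P) ≤ 2 * B := by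
  set Q := Measure.pi fun _ : J => P
  have integrable_sup (ε : J → ℤˣ) :
      Integrable (fun p => ⨆ i, ∑ j, ε j • (f i (p.2 j) - f i (p.1 j))) (Q.prod Q) := by
    refine .of_bound (Measurable.iSup fun i => by fun_prop).aestronglyMeasurable _
      (ae_of_all _ fun p => abs_ciSup_le fun i => (Finset.abs_sum_le_sum_abs _ _).trans
        (Finset.sum_le_sum (g := fun _ => c) fun j _ => ?_))
    rw [abs_units_smul]
    exact hc i _ _
  have bound_pair : ∀ᵐ p ∂Q.prod Q,
      RademacherBound (fun i j => f i (p.2 j) - f i (p.1 j)) (2 * B) := by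
    filter_upwards [Measure.quasiMeasurePreserving_fst.ae hB,
      Measure.quasiMeasurePreserving_snd.ae hB] with p h₁ h₂
    simpa only [sub_eq_add_neg, two_mul] using h₂.add h₁.neg
  calc ∫ p, ⨆ i, ∑ j, (f i (p.2 j) - f i (p.1 j)) ∂Q.prod Q
      = 𝔼 ε : J → ℤˣ, ∫ p, ⨆ i, ∑ j, ε j • (f i (p.2 j) - f i (p.1 j)) ∂Q.prod Q := by
        simp only [Q, integral_iSup_sum_smul_sub_eq hf, Fintype.expect_const]
    _ = ∫ p, 𝔼 ε : J → ℤˣ, ⨆ i, ∑ j, ε j • (f i (p.2 j) - f i (p.1 j)) ∂Q.prod Q := by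
        simp only [Finset.expect_eq_sum_div_card]
        rw [integral_div, integral_finsetSum _ fun ε _ => integrable_sup ε]
    _ ≤ ∫ _, 2 * B ∂Q.prod Q := by
        refine integral_mono_ae ?_ (integrable_const _)
          (bound_pair.mono fun p h => h.expect_iSup_le)
        simp only [Finset.expect_eq_sum_div_card]
        exact (integrable_finsetSum _ fun ε _ => integrable_sup ε).div_const _
    _ = 2 * B := by simp

end Symmetrization

section UniformDeviation

open scoped NNReal

variable {α ι J : Type*} [MeasurableSpace α] [Fintype J] {P : Measure α}

/-- The difference of the population mean of `g` and its mean over the sample `ω`, multiplied by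
the sample size. It is written in terms of differences of values of `g`, so that a bound on the
oscillation of `g` controls it. -/
noncomputable def sampleDeviation (P : Measure α) (g : α → ℝ) (ω : J → α) : ℝ :=
  ∑ j, ∫ x, (g x - g (ω j)) ∂P

lemma sampleDeviation_neg (g : α → ℝ) (ω : J → α) :
    sampleDeviation P (-g) ω = -sampleDeviation P g ω := by
  simp only [sampleDeviation, Pi.neg_apply, neg_sub_neg, ← Finset.sum_neg_distrib,
    ← integral_neg, neg_sub]

variable [IsProbabilityMeasure P]

lemma sampleDeviation_eq {g : α → ℝ} (hg : Integrable g P) (ω : J → α) :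
    sampleDeviation P g ω = Fintype.card J * ∫ x, g x ∂P - ∑ j, g (ω j) := by
  simp [sampleDeviation, integral_sub hg (integrable_const _)]

lemma integrable_of_abs_sub_le {g : α → ℝ} (hg : Measurable g) {c : ℝ}
    (hc : ∀ x y, |g x - g y| ≤ c) : Integrable g P := by
  obtain ⟨x₀⟩ := nonempty_of_isProbabilityMeasure P
  refine .of_bound hg.aestronglyMeasurable (|g x₀| + c) (ae_of_all _ fun x => ?_)
  rw [Real.norm_eq_abs]
  linarith [abs_sub_abs_le_abs_sub (g x) (g x₀), hc x x₀]

lemma abs_sampleDeviation_le {g : α → ℝ} {c : ℝ} (hc : ∀ x y, |g x - g y| ≤ c) (ω : J → α) :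
    |sampleDeviation P g ω| ≤ Fintype.card J * c := by
  have abs_summand_le (j : J) : |∫ x, (g x - g (ω j)) ∂P| ≤ c := by
    simpa using norm_integral_le_of_norm_le_const (μ := P) (f := fun x => g x - g (ω j))
      (ae_of_all _ fun x => hc x (ω j))
  simpa [sampleDeviation] using (Finset.abs_sum_le_sum_abs _ _).trans
    (Finset.sum_le_sum fun j (_ : j ∈ Finset.univ) => abs_summand_le j)

lemma bddAbove_range_sampleDeviation {f : ι → α → ℝ} {c : ℝ}
    (hc : ∀ i x y, |f i x - f i y| ≤ c) (ω : J → α) :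
    BddAbove (Set.range fun i => sampleDeviation P (f i) ω) :=
  ⟨Fintype.card J * c, Set.forall_mem_range.mpr fun i =>
    (le_abs_self _).trans (abs_sampleDeviation_le (hc i) ω)⟩

lemma measurable_sampleDeviation {g : α → ℝ} (hg : Measurable g) {c : ℝ}
    (hc : ∀ x y, |g x - g y| ≤ c) : Measurable (sampleDeviation P g : (J → α) → ℝ) := by
  simp only [funext (sampleDeviation_eq (integrable_of_abs_sub_le hg hc))]
  fun_prop

lemma abs_sampleDeviation_update_sub_le [DecidableEq J] {g : α → ℝ} (hg : Measurable g) {c : ℝ}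
    (hc : ∀ x y, |g x - g y| ≤ c) (ω : J → α) (j : J) (a : α) :
    |sampleDeviation P g (Function.update ω j a) - sampleDeviation P g ω| ≤ c := by
  have integrable_g : Integrable g P := integrable_of_abs_sub_le hg hc
  rw [sampleDeviation_eq integrable_g, sampleDeviation_eq integrable_g, sub_sub_sub_cancel_left,
    ← Finset.sum_sub_distrib, Finset.sum_eq_single j (fun k _ hk => by simp [hk]) (by simp)]
  simpa using hc _ _

lemma continuous_sampleDeviation [TopologicalSpace ι] [FirstCountableTopology ι]
    {f : ι → α → ℝ} (hf : ∀ i, Measurable (f i)) (hcont : ∀ x, Continuous fun i => f i x) {c : ℝ}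
    (hc : ∀ i x y, |f i x - f i y| ≤ c) (ω : J → α) :
    Continuous fun i => sampleDeviation P (f i) ω :=
  continuous_finsetSum _ fun j _ => continuous_of_dominated (bound := fun _ => c)
    (fun i => by fun_prop) (fun i => ae_of_all _ fun x => hc i x (ω j)) (integrable_const _)
    (ae_of_all _ fun x => (hcont x).sub (hcont (ω j)))

lemma sampleDeviation_eq_integral_sample {g : α → ℝ} (hg : Integrable g P) (ω : J → α) :
    sampleDeviation P g ω = ∫ ω', ∑ j, (g (ω' j) - g (ω j)) ∂Measure.pi fun _ : J => P := by
  have integrable_sub (j : J) : Integrable (fun x => g x - g (ω j)) P :=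
    hg.sub (integrable_const _)
  rw [integral_finsetSum _ fun j _ => integrable_comp_eval (μ := fun _ : J => P) (integrable_sub j)]
  exact Finset.sum_congr rfl fun j _ => (integral_comp_eval (μ := fun _ : J => P)
    (integrable_sub j).aestronglyMeasurable).symm

variable {f : ι → α → ℝ}

-- Symmetrization: the population mean is the expected mean over an independent ghost sample.
theorem integral_iSup_sampleDeviation_le [DecidableEq J] [Countable ι] [Nonempty ι]
    (hf : ∀ i, Measurable (f i)) {c : ℝ} (hc : ∀ i x y, |f i x - f i y| ≤ c) {B : ℝ}
    (hB : ∀ᵐ ω ∂Measure.pi fun _ : J => P, RademacherBound (fun i j => f i (ω j)) B) :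
    ∫ ω, ⨆ i, sampleDeviation P (f i) ω ∂Measure.pi (fun _ : J => P) ≤ 2 * B := by
  set Q := Measure.pi fun _ : J => P
  set G : (J → α) × (J → α) → ℝ := fun p => ⨆ i, ∑ j, (f i (p.2 j) - f i (p.1 j))
  have measurable_G : Measurable G := Measurable.iSup fun i => by fun_prop
  have abs_gap_le (i) (ω ω' : J → α) : |∑ j, (f i (ω' j) - f i (ω j))| ≤ ∑ _j : J, c :=
    (Finset.abs_sum_le_sum_abs _ _).trans (Finset.sum_le_sum fun j _ => hc i _ _)
  have abs_G_le (p) : |G p| ≤ ∑ _j : J, c := abs_ciSup_le fun i => abs_gap_le i p.1 p.2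
  have integrable_G : Integrable G (Q.prod Q) :=
    .of_bound measurable_G.aestronglyMeasurable _ (ae_of_all _ abs_G_le)
  have le_ghost (ω : J → α) : ⨆ i, sampleDeviation P (f i) ω ≤ ∫ ω', G (ω, ω') ∂Q := by
    refine ciSup_le fun i => ?_
    rw [sampleDeviation_eq_integral_sample (integrable_of_abs_sub_le (hf i) (hc i))]
    refine integral_mono
      (.of_bound (Measurable.aestronglyMeasurable (by fun_prop)) _ (ae_of_all _ (abs_gap_le i ω)))
      (.of_bound (measurable_G.comp measurable_prodMk_left).aestronglyMeasurable _
        (ae_of_all _ fun ω' => abs_G_le (ω, ω'))) fun ω' => ?_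
    exact le_ciSup (f := fun i => ∑ j, (f i (ω' j) - f i (ω j))) ⟨_, Set.forall_mem_range.mpr
      fun i => (le_abs_self _).trans (abs_gap_le i ω ω')⟩ i
  calc ∫ ω, ⨆ i, sampleDeviation P (f i) ω ∂Q
      ≤ ∫ ω, ∫ ω', G (ω, ω') ∂Q ∂Q := by
        refine integral_mono (.of_bound (Measurable.iSup fun i =>
          measurable_sampleDeviation (hf i) (hc i)).aestronglyMeasurable _ (ae_of_all _ fun ω =>
            abs_ciSup_le fun i => abs_sampleDeviation_le (hc i) ω)) ?_ le_ghost
        exact integrable_G.integral_prod_left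
    _ = ∫ p, G p ∂Q.prod Q := (integral_prod G integrable_G).symm
    _ ≤ 2 * B := integral_iSup_sum_sub_le hf hc hB

variable {n : ℕ} {c : ℝ≥0} {B t : ℝ}

lemma measureReal_le_iSup_sampleDeviation_le [Countable ι] [Nonempty ι]
    (hf : ∀ i, Measurable (f i)) (hc : ∀ i x y, |f i x - f i y| ≤ c)
    (hB : ∀ᵐ ω ∂Measure.pi fun _ : Fin n => P, RademacherBound (fun i j => f i (ω j)) B)
    (ht : 0 ≤ t) :
    (Measure.pi fun _ : Fin n => P).real {ω | 2 * B + t ≤ ⨆ i, sampleDeviation P (f i) ω} ≤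
      Real.exp (-(2 * t ^ 2 / (n * c ^ 2))) := by
  have subgaussian := hasSubgaussianMGF_of_bounded_differences (fun _ : Fin n => P)
    (F := fun ω => ⨆ i, sampleDeviation P (f i) ω) (c := fun _ => c)
    (Measurable.iSup fun i => measurable_sampleDeviation (hf i) (hc i)) fun ω j a =>
      abs_ciSup_sub_ciSup_le (bddAbove_range_sampleDeviation hc _)
        (bddAbove_range_sampleDeviation hc _)
        fun i => abs_sampleDeviation_update_sub_le (hf i) (hc i) ω j a
  have mean_le := integral_iSup_sampleDeviation_le hf hc hB
  refine (measureReal_mono fun ω hω => ?_).trans ((subgaussian.measure_ge_le ht).trans_eq ?_)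
  · rw [Set.mem_ofPred_eq] at hω ⊢
    linarith
  · rw [Finset.sum_const, Finset.card_univ, Fintype.card_fin]
    push_cast
    rw [nsmul_eq_mul]
    congr 1
    field_simp

lemma measureReal_exists_lt_sampleDeviation_le [TopologicalSpace ι]
    [TopologicalSpace.SeparableSpace ι] [FirstCountableTopology ι] (hf : ∀ i, Measurable (f i))
    (hcont : ∀ x, Continuous fun i => f i x) (hc : ∀ i x y, |f i x - f i y| ≤ c)
    (hB : ∀ᵐ ω ∂Measure.pi fun _ : Fin n => P, RademacherBound (fun i j => f i (ω j)) B)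
    (ht : 0 ≤ t) :
    (Measure.pi fun _ : Fin n => P).real {ω | ∃ i, 2 * B + t < sampleDeviation P (f i) ω} ≤
      Real.exp (-(2 * t ^ 2 / (n * c ^ 2))) := by
  rcases isEmpty_or_nonempty ι with hι | hι
  · simpa using (Real.exp_pos _).le
  obtain ⟨s, s_countable, s_dense⟩ := TopologicalSpace.exists_countable_dense ι
  have : Countable s := s_countable
  have : Nonempty s := s_dense.nonempty.to_subtype
  refine (measureReal_mono ?_).trans (measureReal_le_iSup_sampleDeviation_le (ι := s)
    (fun i => hf i) (fun i => hc i) (hB.mono fun ω h => h.comp Subtype.val) ht)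
  rintro ω ⟨i, hi⟩
  obtain ⟨i', hi', hi's⟩ := s_dense.exists_mem_open
    (isOpen_Ioi.preimage (continuous_sampleDeviation hf hcont hc ω)) ⟨i, hi⟩
  exact hi's.le.trans
    (le_ciSup (bddAbove_range_sampleDeviation (fun i : s => hc i) ω) ⟨i', hi'⟩)

theorem measureReal_exists_lt_abs_sampleDeviation_le [TopologicalSpace α]
    [SecondCountableTopology α] [LocallyCompactSpace α] [OpensMeasurableSpace α]
    (hf : ∀ i, Continuous (f i)) (hc : ∀ i x y, |f i x - f i y| ≤ c)
    (hB : ∀ᵐ ω ∂Measure.pi fun _ : Fin n => P, RademacherBound (fun i j => f i (ω j)) B)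
    (ht : 0 ≤ t) :
    (Measure.pi fun _ : Fin n => P).real {ω | ∃ i, 2 * B + t < |sampleDeviation P (f i) ω|} ≤
      2 * Real.exp (-(2 * t ^ 2 / (n * c ^ 2))) := by
  let F (i : ι) : C(α, ℝ) := ⟨f i, hf i⟩
  let : TopologicalSpace ι := .induced F inferInstance
  have : SecondCountableTopology ι := TopologicalSpace.secondCountableTopology_induced _ _ _
  have continuous_eval (x : α) : Continuous fun i => f i x :=
    (continuous_eval_const x).comp (continuous_induced_dom (f := F))
  have upper := measureReal_exists_lt_sampleDeviation_le (fun i => (hf i).measurable)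
    continuous_eval hc hB ht
  have lower := measureReal_exists_lt_sampleDeviation_le (f := fun i => -f i)
    (fun i => (hf i).neg.measurable) (fun x => (continuous_eval x).neg)
    (fun i x y => by simpa [abs_sub_comm, neg_add_eq_sub] using hc i x y)
    (hB.mono fun ω h => h.neg) ht
  simp only [sampleDeviation_neg] at lower
  simp only [lt_abs, exists_or, Set.ofPred_or]
  exact (measureReal_union_le _ _).trans (by linarith)

end UniformDeviation

section Generalization

open scoped NNReal

lemma ae_mem_uniformOfFinset {α : Type*} [MeasurableSpace α] [MeasurableSingletonClass α]
    (D : Finset α) (hD : D.Nonempty) : ∀ᵐ x ∂(PMF.uniformOfFinset D hD).toMeasure, x ∈ D := by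
  rw [← PMF.restrict_toMeasure_support, PMF.support_uniformOfFinset]
  exact ae_restrict_mem D.measurableSet

lemma integral_uniformOfFinset {α : Type*} [MeasurableSpace α] [MeasurableSingletonClass α]
    (D : Finset α) (hD : D.Nonempty) (g : α → ℝ) :
    ∫ x, g x ∂(PMF.uniformOfFinset D hD).toMeasure = (∑ x ∈ D, g x) / D.card := by
  conv_lhs => rw [← PMF.restrict_toMeasure_support, PMF.support_uniformOfFinset]
  rw [setIntegral_finset D IntegrableOn.finset, Finset.sum_div]
  refine Finset.sum_congr rfl fun x hx => ?_
  rw [measureReal_def, PMF.toMeasure_apply_singleton _ _ (measurableSet_singleton x),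
    PMF.uniformOfFinset_apply_of_mem hD hx]
  simp [div_eq_inv_mul]

lemma ofReal_one_sub_le_measure {Ω : Type*} [MeasurableSpace Ω] {P : Measure Ω}
    [IsProbabilityMeasure P] {s : Set Ω} {η : ℝ} (hs : P.real sᶜ ≤ η) :
    ENNReal.ofReal (1 - η) ≤ P s := by
  rw [ENNReal.ofReal_le_iff_le_toReal (measure_ne_top P s), sub_le_iff_le_add]
  calc 1 = P.real (s ∪ sᶜ) := by simp
    _ ≤ P.real s + P.real sᶜ := measureReal_union_le s sᶜ
    _ ≤ (P s).toReal + η := by gcongr; exact le_rfl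

theorem ofReal_one_sub_le_measure_forall_abs_integral_sub_mean_le {α ι : Type*}
    [MeasurableSpace α] [TopologicalSpace α] [SecondCountableTopology α] [LocallyCompactSpace α]
    [OpensMeasurableSpace α] {P : Measure α} [IsProbabilityMeasure P] {f : ι → α → ℝ}
    (hf : ∀ i, Continuous (f i)) (hIcc : ∀ i x, f i x ∈ Set.Icc 0 1) {n : ℕ} (hn : n ≠ 0) {B : ℝ}
    (hB : ∀ᵐ ω ∂Measure.pi fun _ : Fin n => P, RademacherBound (fun i j => f i (ω j)) B)
    {η : ℝ} (hη : 0 < η) (hη₁ : η ≤ 1) :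
    ENNReal.ofReal (1 - η) ≤ (Measure.pi fun _ : Fin n => P)
      {ω | ∀ i, |∫ x, f i x ∂P - (∑ j, f i (ω j)) / n| ≤
        2 * B / n + √(Real.log (2 / η) / (2 * n))} := by
  have hc (i x y) : |f i x - f i y| ≤ (1 : ℝ≥0) := by
    rw [abs_sub_le_iff, NNReal.coe_one]
    constructor <;> linarith [(hIcc i x).1, (hIcc i x).2, (hIcc i y).1, (hIcc i y).2]
  have n_pos : (0 : ℝ) < n := by positivity
  have log_nonneg : 0 ≤ Real.log (2 / η) := Real.log_nonneg (by rw [le_div_iff₀ hη]; linarith)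
  set r := √(Real.log (2 / η) / (2 * n))
  have r_sq : r ^ 2 = Real.log (2 / η) / (2 * n) := Real.sq_sqrt (by positivity)
  have tail := measureReal_exists_lt_abs_sampleDeviation_le hf hc hB (t := n * r) (by positivity)
  have tail_eq : 2 * Real.exp (-(2 * (n * r) ^ 2 / (n * (1 : ℝ≥0) ^ 2))) = η := by
    have exponent_eq : 2 * (n * r) ^ 2 / (n * (1 : ℝ≥0) ^ 2) = Real.log (2 / η) := by
      rw [mul_pow, r_sq, NNReal.coe_one]
      field_simp
    rw [exponent_eq, Real.exp_neg, Real.exp_log (by positivity)]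
    field_simp
  refine ofReal_one_sub_le_measure ((measureReal_mono fun ω hω => ?_).trans (tail.trans_eq tail_eq))
  simp only [Set.mem_compl_iff, Set.mem_ofPred_eq, not_forall, not_le] at hω ⊢
  refine hω.imp fun i hi => ?_
  have deviation_eq : sampleDeviation P (f i) ω =
      n * (∫ x, f i x ∂P - (∑ j, f i (ω j)) / n) := by
    rw [sampleDeviation_eq (integrable_of_abs_sub_le (hf i).measurable (hc i)), Fintype.card_fin]
    field_simp
  rw [deviation_eq, abs_mul, abs_of_pos n_pos]
  calc 2 * B + n * r = n * (2 * B / n + r) := by field_simp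
    _ < _ := mul_lt_mul_of_pos_left hi n_pos

variable {d K : ℕ} {ξ ζ ν R : ℝ}

theorem ofReal_one_sub_le_measure_forall_abs_integral_resp_sub_mean_le (hζ : 0 < ζ) (hν : 0 ≤ ν)
    (hR : 0 ≤ R) {P : Measure (EuclideanSpace ℝ (Fin d))} [IsProbabilityMeasure P]
    (hP : ∀ᵐ x ∂P, ‖x‖ ≤ R) {n : ℕ} (hn : n ≠ 0) {η : ℝ} (hη : 0 < η) (hη₁ : η ≤ 1) :
    ENNReal.ofReal (1 - η) ≤ (Measure.pi fun _ : Fin n => P)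
      {ω | ∀ (π : Fin K → ℝ) (μ : Fin K → EuclideanSpace ℝ (Fin d))
        (S : Fin K → Matrix (Fin d) (Fin d) ℝ), inPhi ξ ζ ν π μ S → ∀ k,
        |∫ x, resp π μ S k x ∂P - (∑ j, resp π μ S k (ω j)) / n| ≤
          2 * respComplexity ζ ν R * √(d / n) + √(Real.log (2 / η) / (2 * n))} := by
  rcases eq_or_ne d 0 with rfl | hd
  · have deviation_eq_zero (g : EuclideanSpace ℝ (Fin 0) → ℝ) (ω : Fin n → _) :
        ∫ x, g x ∂P - (∑ j, g (ω j)) / n = 0 := by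
      simp [Subsingleton.elim _ (0 : EuclideanSpace ℝ (Fin 0)), hn]
    have radius_nonneg : 0 ≤ 2 * respComplexity ζ ν R * √((0 : ℕ) / n) +
        √(Real.log (2 / η) / (2 * n)) := by
      have := respComplexity_pos hζ ν R
      positivity
    simp only [deviation_eq_zero, abs_zero, radius_nonneg, implies_true, Set.ofPred_true,
      measure_univ]
    exact ENNReal.ofReal_le_one.mpr (by linarith)
  have sample_norm_le : ∀ᵐ ω ∂Measure.pi fun _ : Fin n => P, ∀ j, ‖ω j‖ ≤ R :=
    ae_all_iff.mpr fun j => (Measure.quasiMeasurePreserving_eval (fun _ => P) j).ae hP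
  have uniform := ofReal_one_sub_le_measure_forall_abs_integral_sub_mean_le
    (ι := {Θ : (Fin K → ℝ) × (Fin K → EuclideanSpace ℝ (Fin d)) ×
      (Fin K → Matrix (Fin d) (Fin d) ℝ) // inPhi ξ ζ ν Θ.1 Θ.2.1 Θ.2.2} × Fin K)
    (f := fun i => resp i.1.1.1 i.1.1.2.1 i.1.1.2.2 i.2)
    (fun i => i.1.2.continuous_resp hζ i.2) (fun i => i.1.2.resp_mem_Icc hζ i.2) hn
    (sample_norm_le.mono fun ω hω => rademacherBound_resp hζ hν hR hd (fun i => i.1.2) Prod.snd hω)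
    hη hη₁
  have complexity_eq : 2 * (respComplexity ζ ν R * (√d * √(Fintype.card (Fin n)))) / n =
      2 * respComplexity ζ ν R * √(d / n) := by
    rw [Fintype.card_fin, Real.sqrt_div (Nat.cast_nonneg d), div_eq_mul_inv √(d : ℝ),
      ← Real.sqrt_div_self]
    ring
  rw [complexity_eq] at uniform
  exact uniform.trans (measure_mono fun ω hω π μ S hΦ k => hω (⟨(π, μ, S), hΦ⟩, k))

lemma deviation_radius_le {C m n δ : ℝ} (hC : 0 ≤ C) (hδ : 0 < δ) (hδ₁ : δ < 1) (hm : 0 < m)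
    (hmn : m ≤ n) :
    2 * C * √(d / n) + √(Real.log (2 / (δ / 2)) / (2 * n)) ≤
      2 * C * √(d / m) + 4 * √(2 * Real.log (8 / δ) / m) := by
  have log_pos : 0 < Real.log (8 / δ) := Real.log_pos (by rw [lt_div_iff₀ hδ]; linarith)
  have log_le : Real.log (2 / (δ / 2)) ≤ Real.log (8 / δ) := by
    rw [div_div_eq_mul_div]
    gcongr
    norm_num
  have sqrt_log_le : √(Real.log (2 / (δ / 2)) / (2 * n)) ≤ √(2 * Real.log (8 / δ) / m) := by
    gcongr <;> linarith
  gcongr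
  exact sqrt_log_le.trans (le_mul_of_one_le_left (Real.sqrt_nonneg _) (by norm_num))

lemma abs_ciSup_abs_sub_sub_ciSup_abs_sub_le {ι : Type*} [Finite ι] [Nonempty ι]
    {a b a' b' : ι → ℝ} {r s : ℝ} (ha : ∀ i, |a i - a' i| ≤ r) (hb : ∀ i, |b i - b' i| ≤ s) :
    |(⨆ i, |a i - b i|) - (⨆ i, |a' i - b' i|)| ≤ r + s := by
  refine abs_ciSup_sub_ciSup_le (Set.finite_range _).bddAbove (Set.finite_range _).bddAbove
    fun i => ?_
  calc |(|a i - b i|) - (|a' i - b' i|)| ≤ |(a i - b i) - (a' i - b' i)| :=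
        abs_abs_sub_abs_le_abs_sub _ _
    _ = |(a i - a' i) - (b i - b' i)| := by rw [sub_sub_sub_comm]
    _ ≤ |a i - a' i| + |b i - b' i| := abs_sub _ _
    _ ≤ r + s := add_le_add (ha i) (hb i)

theorem fairness_gap_generalization_general (hζ : 0 < ζ) (hν : 0 ≤ ν) (hR : 0 ≤ R) :
    ∃ C : ℝ, 0 < C ∧ ∀ (ξ : ℝ) (d K : ℕ) (P Q : Measure (EuclideanSpace ℝ (Fin d)))
      [IsProbabilityMeasure P] [IsProbabilityMeasure Q],
      (∀ᵐ x ∂P, ‖x‖ ≤ R) → (∀ᵐ x ∂Q, ‖x‖ ≤ R) →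
      ∀ (n₁ n₂ : ℕ), 1 ≤ n₁ → 1 ≤ n₂ → ∀ δ : ℝ, 0 < δ → δ < 1 →
        ENNReal.ofReal (1 - δ) ≤
          ((Measure.pi fun _ : Fin n₁ => P).prod (Measure.pi fun _ : Fin n₂ => Q))
            {ω | ∀ (π : Fin K → ℝ) (μ : Fin K → EuclideanSpace ℝ (Fin d))
              (S : Fin K → Matrix (Fin d) (Fin d) ℝ), inPhi ξ ζ ν π μ S →
              |(⨆ k, |∫ x, resp π μ S k x ∂P - ∫ x, resp π μ S k x ∂Q|) -
                (⨆ k, |(∑ i, resp π μ S k (ω.1 i)) / n₁ - (∑ j, resp π μ S k (ω.2 j)) / n₂|)| ≤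
                4 * C * √(d / (min n₁ n₂ : ℕ)) +
                  8 * √(2 * Real.log (8 / δ) / (min n₁ n₂ : ℕ))} := by
  refine ⟨respComplexity ζ ν R, respComplexity_pos hζ ν R, ?_⟩
  intro ξ d K P Q _ _ hP hQ n₁ n₂ hn₁ hn₂ δ hδ hδ₁
  have bound_P := ofReal_one_sub_le_measure_forall_abs_integral_resp_sub_mean_le (K := K) (ξ := ξ)
    hζ hν hR hP (Nat.one_le_iff_ne_zero.mp hn₁) (half_pos hδ) (by linarith)
  have bound_Q := ofReal_one_sub_le_measure_forall_abs_integral_resp_sub_mean_le (K := K) (ξ := ξ)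
    hζ hν hR hQ (Nat.one_le_iff_ne_zero.mp hn₂) (half_pos hδ) (by linarith)
  have confidence_le : ENNReal.ofReal (1 - δ) ≤
      ENNReal.ofReal (1 - δ / 2) * ENNReal.ofReal (1 - δ / 2) := by
    rw [← ENNReal.ofReal_mul (by linarith)]
    exact ENNReal.ofReal_le_ofReal (by nlinarith)
  refine confidence_le.trans ((mul_le_mul' bound_P bound_Q).trans ?_)
  rw [← Measure.prod_prod]
  refine measure_mono fun ω ⟨hω₁, hω₂⟩ π μ S hΦ => ?_
  have : Nonempty (Fin K) := Finset.univ_nonempty_iff.mp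
    (Finset.nonempty_of_sum_ne_zero (f := π) (by simp [hΦ.2.1]))
  have min_pos : (0 : ℝ) < (min n₁ n₂ : ℕ) := by exact_mod_cast lt_min hn₁ hn₂
  have complexity_nonneg := (respComplexity_pos hζ ν R).le
  have radius_P := deviation_radius_le (d := d) complexity_nonneg hδ hδ₁ min_pos
    (Nat.cast_le.mpr (min_le_left n₁ n₂))
  have radius_Q := deviation_radius_le (d := d) complexity_nonneg hδ hδ₁ min_pos
    (Nat.cast_le.mpr (min_le_right n₁ n₂))
  refine (abs_ciSup_abs_sub_sub_ciSup_abs_sub_le (fun k => (hω₁ π μ S hΦ k).trans radius_P)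
    (fun k => (hω₂ π μ S hΦ k).trans radius_Q)).trans_eq ?_
  ring

end Generalization

/-- **Generalization of the sub-sampled fairness gap.**  For `Δ(Θ)` the population gap
over the finite data sets `D¹, D²` and `Δₙ(Θ)` the gap over `n₁` (resp. `n₂`) i.i.d.
uniform draws with replacement from `D¹` (resp. `D²`), there is a constant
`C = C(ξ,ζ,ν,x_max) > 0` such that with probability at least `1 - δ`,
`sup_{Θ ∈ Φ} |Δ(Θ) - Δₙ(Θ)| ≤ 4C√(d/n') + 8√(2 log(8/δ)/n')` where `n' = min{n₁,n₂}`. -/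
theorem fairness_gap_generalization
    (ξ ζ ν xmax : ℝ) (hξ : 0 < ξ) (hζ : 0 < ζ) (hν : 0 < ν) (hxmax : 0 < xmax) :
    ∃ C : ℝ, 0 < C ∧
      ∀ (d K : ℕ), 0 < K →
      ∀ (D1 D2 : Finset (EuclideanSpace ℝ (Fin d))) (h1 : D1.Nonempty) (h2 : D2.Nonempty),
        (∀ x ∈ (↑D1 ∪ ↑D2 : Set (EuclideanSpace ℝ (Fin d))), ‖x‖ ≤ xmax) →
      ∀ (n1 n2 : ℕ), 1 ≤ n1 → 1 ≤ n2 →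
      ∀ δ : ℝ, 0 < δ → δ < 1 →
        ((Measure.pi fun _ : Fin n1 => (PMF.uniformOfFinset D1 h1).toMeasure).prod
            (Measure.pi fun _ : Fin n2 => (PMF.uniformOfFinset D2 h2).toMeasure))
          {ω : (Fin n1 → EuclideanSpace ℝ (Fin d)) × (Fin n2 → EuclideanSpace ℝ (Fin d)) |
            ∀ (π : Fin K → ℝ) (μ : Fin K → EuclideanSpace ℝ (Fin d))
              (S : Fin K → Matrix (Fin d) (Fin d) ℝ), inPhi ξ ζ ν π μ S →
              |(⨆ k : Fin K, |(∑ x ∈ D1, resp π μ S k x) / (D1.card : ℝ) -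
                    (∑ x ∈ D2, resp π μ S k x) / (D2.card : ℝ)|) -
                (⨆ k : Fin K, |(∑ i, resp π μ S k (ω.1 i)) / (n1 : ℝ) -
                    (∑ j, resp π μ S k (ω.2 j)) / (n2 : ℝ)|)| ≤
                4 * C * Real.sqrt ((d : ℝ) / (min n1 n2 : ℕ)) +
                  8 * Real.sqrt (2 * Real.log (8 / δ) / (min n1 n2 : ℕ))} ≥
          ENNReal.ofReal (1 - δ) := by
  obtain ⟨C, hC, bound⟩ := fairness_gap_generalization_general hζ hν.le hxmax.le
  refine ⟨C, hC, fun d K _ D1 D2 h1 h2 hx n1 n2 hn1 hn2 δ hδ hδ1 => ?_⟩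
  simpa only [ge_iff_le, integral_uniformOfFinset] using bound ξ d K _ _
    ((ae_mem_uniformOfFinset D1 h1).mono fun x hxD => hx x (Or.inl hxD))
    ((ae_mem_uniformOfFinset D2 h2).mono fun x hxD => hx x (Or.inr hxD))
    n1 n2 hn1 hn2 δ hδ hδ1
end

section
/- Let K ≥ 1 and define the softmax map on ℝ^K by softmax(z)_k = exp(z_k) / Σ_{l=1}^{K} exp(z_l). For any z ∈ ℝ^K, let p = softmax(z) and let J = diag(p) − p pᵀ be the Jacobian matrix of the softmax at z. Then the ℓ₂ operator norm of J is at most 1/2; that is, ‖J v‖₂ ≤ (1/2)‖v‖₂ for every v ∈ ℝ^K. -/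
/-- The softmax map on `ℝ^K`: `softmax(z)_k = exp(z_k) / Σ_l exp(z_l)`. -/
noncomputable def softmax {K : ℕ} (z : Fin K → ℝ) (k : Fin K) : ℝ :=
  Real.exp (z k) / ∑ l, Real.exp (z l)

/-!
The `i`-th row of `J = diag(p) - p pᵀ` has the entry `pᵢ(1 - pᵢ)` on the diagonal and the entries
`-pᵢpⱼ` off it, the latter of total absolute value `pᵢ(1 - pᵢ)` because `p` sums to one. The
absolute row sums are therefore `2pᵢ(1 - pᵢ) ≤ 1/2`, and by symmetry so are the absolute column
sums. Schur's test bounds the ℓ₂ operator norm by the geometric mean of these two bounds.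
-/

section SchurTest

open Matrix
open scoped Matrix.Norms.L2Operator

variable {m n R 𝕜 : Type*} [Fintype m] [Fintype n]

theorem sq_norm_sum_mul_le [SeminormedRing R] (a x : n → R) :
    ‖∑ j, a j * x j‖ ^ 2 ≤ (∑ j, ‖a j‖) * ∑ j, ‖a j‖ * ‖x j‖ ^ 2 := by
  have triangle : ‖∑ j, a j * x j‖ ≤ ∑ j, ‖a j‖ * ‖x j‖ :=
    norm_sum_le_of_le _ fun j _ ↦ norm_mul_le (a j) (x j)
  have cauchySchwarz :
      (∑ j, ‖a j‖ * ‖x j‖) ^ 2 ≤ (∑ j, ‖a j‖) * ∑ j, ‖a j‖ * ‖x j‖ ^ 2 :=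
    Finset.sum_sq_le_sum_mul_sum_of_sq_le_mul _ (fun _ _ ↦ by positivity)
      (fun _ _ ↦ by positivity) fun _ _ ↦ le_of_eq (by ring)
  exact (pow_le_pow_left₀ (norm_nonneg _) triangle 2).trans cauchySchwarz

theorem sum_sq_norm_mulVec_le [SeminormedRing R] (A : Matrix m n R) {r c : ℝ} (hr₀ : 0 ≤ r)
    (hr : ∀ i, ∑ j, ‖A i j‖ ≤ r) (hc : ∀ j, ∑ i, ‖A i j‖ ≤ c) (x : n → R) :
    ∑ i, ‖(A *ᵥ x) i‖ ^ 2 ≤ r * c * ∑ j, ‖x j‖ ^ 2 :=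
  calc
    ∑ i, ‖(A *ᵥ x) i‖ ^ 2
    _ ≤ ∑ i, (∑ j, ‖A i j‖) * ∑ j, ‖A i j‖ * ‖x j‖ ^ 2 :=
      Finset.sum_le_sum fun i _ ↦ sq_norm_sum_mul_le (A i) x
    _ ≤ ∑ i, r * ∑ j, ‖A i j‖ * ‖x j‖ ^ 2 := by gcongr with i; exact hr i
    _ = r * ∑ j, (∑ i, ‖A i j‖) * ‖x j‖ ^ 2 := by
      simp_rw [← Finset.mul_sum, Finset.sum_mul]
      rw [Finset.sum_comm]
    _ ≤ r * ∑ j, c * ‖x j‖ ^ 2 := by gcongr with j; exact hc j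
    _ = r * c * ∑ j, ‖x j‖ ^ 2 := by rw [← Finset.mul_sum, mul_assoc]

theorem l2_opNorm_le_sqrt_of_sum_norm_le [RCLike 𝕜] [DecidableEq n] (A : Matrix m n 𝕜) {r c : ℝ}
    (hr₀ : 0 ≤ r) (hr : ∀ i, ∑ j, ‖A i j‖ ≤ r) (hc : ∀ j, ∑ i, ‖A i j‖ ≤ c) :
    ‖A‖ ≤ √(r * c) := by
  rw [l2_opNorm_def]
  refine ContinuousLinearMap.opNorm_le_bound _ (Real.sqrt_nonneg _) fun x ↦ ?_
  rw [EuclideanSpace.norm_eq, EuclideanSpace.norm_eq x,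
    ← Real.sqrt_mul' _ (Finset.sum_nonneg fun _ _ ↦ by positivity)]
  exact Real.sqrt_le_sqrt (sum_sq_norm_mulVec_le A hr₀ hr hc x.ofLp)

theorem l2_opNorm_le_of_isHermitian_of_sum_norm_le [RCLike 𝕜] [DecidableEq n]
    {A : Matrix n n 𝕜} (hA : A.IsHermitian) {r : ℝ} (hr₀ : 0 ≤ r)
    (hr : ∀ i, ∑ j, ‖A i j‖ ≤ r) : ‖A‖ ≤ r := by
  have hc (j : n) : ∑ i, ‖A i j‖ ≤ r := by
    simpa only [← hA.apply _ j, norm_star] using hr j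
  simpa only [Real.sqrt_mul_self hr₀] using l2_opNorm_le_sqrt_of_sum_norm_le A hr₀ hr hc

end SchurTest

section CategoricalCov

open Matrix
open scoped Matrix.Norms.L2Operator

variable {ι R : Type*} [DecidableEq ι]

/-- The matrix `diag(p) - p pᵀ`: the covariance matrix of the one-hot encoding of a categorical
variable with probability vector `p`, and the Jacobian of softmax at any `z` with
`softmax z = p`. -/
def categoricalCov [Ring R] (p : ι → R) : Matrix ι ι R :=
  diagonal p - vecMulVec p p

theorem categoricalCov_apply [Ring R] (p : ι → R) (i j : ι) :
    categoricalCov p i j = (if i = j then p i else 0) - p i * p j :=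
  rfl

theorem isSymm_categoricalCov [CommRing R] (p : ι → R) : (categoricalCov p).IsSymm :=
  (isSymm_diagonal p).sub (transpose_vecMulVec p p)

variable [Fintype ι] {p : ι → ℝ}

theorem sum_abs_categoricalCov_le (hp : ∀ i, 0 ≤ p i) (hsum : ∑ i, p i ≤ 1) (i : ι) :
    ∑ j, |categoricalCov p i j| ≤ 2 * (p i * (1 - p i)) := by
  have hpi : p i ≤ 1 := (Finset.single_le_sum (fun j _ ↦ hp j) (Finset.mem_univ i)).trans hsum
  have diag : |categoricalCov p i i| = p i * (1 - p i) := by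
    rw [categoricalCov_apply, if_pos rfl, ← mul_one_sub,
      abs_of_nonneg (mul_nonneg (hp i) (sub_nonneg.2 hpi))]
  have offDiag : ∀ j ∈ Finset.univ.erase i, |categoricalCov p i j| = p i * p j := fun j hj ↦ by
    rw [categoricalCov_apply, if_neg (Finset.ne_of_mem_erase hj).symm, zero_sub, abs_neg,
      abs_of_nonneg (mul_nonneg (hp i) (hp j))]
  calc
    ∑ j, |categoricalCov p i j|
    _ = p i * (1 - p i) + p i * ∑ j ∈ Finset.univ.erase i, p j := by
      rw [← Finset.add_sum_erase _ _ (Finset.mem_univ i), diag, Finset.sum_congr rfl offDiag,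
        Finset.mul_sum]
    _ ≤ p i * (1 - p i) + p i * (1 - p i) := by
      gcongr
      · exact hp i
      · linarith [Finset.add_sum_erase _ p (Finset.mem_univ i)]
    _ = 2 * (p i * (1 - p i)) := (two_mul _).symm

theorem l2_opNorm_categoricalCov_le_half (hp : ∀ i, 0 ≤ p i) (hsum : ∑ i, p i ≤ 1) :
    ‖categoricalCov p‖ ≤ 1 / 2 :=
  l2_opNorm_le_of_isHermitian_of_sum_norm_le (isHermitian_iff_isSymm.2 (isSymm_categoricalCov p))
    (by norm_num) fun i ↦
      calc
        ∑ j, |categoricalCov p i j|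
        _ ≤ 2 * (p i * (1 - p i)) := sum_abs_categoricalCov_le hp hsum i
        _ ≤ 1 / 2 := by linarith [sq_nonneg (2 * p i - 1)]

theorem norm_categoricalCov_mulVec_le (hp : ∀ i, 0 ≤ p i) (hsum : ∑ i, p i ≤ 1) (v : ι → ℝ) :
    ‖WithLp.toLp 2 (categoricalCov p *ᵥ v)‖ ≤ 1 / 2 * ‖WithLp.toLp 2 v‖ :=
  (l2_opNorm_mulVec (categoricalCov p) (WithLp.toLp 2 v)).trans <|
    mul_le_mul_of_nonneg_right (l2_opNorm_categoricalCov_le_half hp hsum) (norm_nonneg _)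

end CategoricalCov

section Softmax

variable {K : ℕ} (z : Fin K → ℝ)

theorem softmax_nonneg (k : Fin K) : 0 ≤ softmax z k := by
  unfold softmax
  positivity

theorem sum_softmax_le_one : ∑ k, softmax z k ≤ 1 := by
  unfold softmax
  rw [← Finset.sum_div]
  exact div_self_le_one _

end Softmax

/-- **Operator-norm bound for the softmax Jacobian.**  For `p = softmax(z)` and
`J = diag(p) - p pᵀ` (the Jacobian of softmax at `z`), the ℓ₂ operator norm of `J` is at
most `1/2`: `‖J v‖₂ ≤ (1/2) ‖v‖₂` for every `v ∈ ℝ^K`. -/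
theorem softmax_jacobian_opNorm_le_half (K : ℕ) (hK : 1 ≤ K) (z v : Fin K → ℝ) :
    Real.sqrt (∑ i,
        (∑ j, ((if i = j then softmax z i else 0) - softmax z i * softmax z j) * v j) ^ 2) ≤
      (1 / 2) * Real.sqrt (∑ i, v i ^ 2) := by
  have hJv := norm_categoricalCov_mulVec_le (softmax_nonneg z) (sum_softmax_le_one z) v
  simpa only [EuclideanSpace.norm_eq, Real.norm_eq_abs, sq_abs, Matrix.mulVec, dotProduct,
    categoricalCov_apply] using hJv
end

section
/- Let f : ℝ^p → ℝ be differentiable with L-Lipschitz gradient (L > 0), let Φ ⊆ ℝ^p be a nonempty closed convex set, let x ∈ Φ, let 0 < γ < 2/L, and let y = Π_Φ(x − γ∇f(x)). Define the gradient mapping G_γ(x) = (x − y)/γ and ν = γ − (L/2)γ², so that ν > 0. Then f(y) ≤ f(x) − ν‖G_γ(x)‖². -/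
/-!
The projection inequality at `y`, tested against `x`, says `‖x - y‖² ≤ γ ⟪∇f x, x - y⟫`, so the
step from `x` to `y` lowers the linear model of `f` at `x` by at least `γ⁻¹ ‖x - y‖²`. The
`L`-Lipschitz gradient bounds the error of that model by `(L / 2) ‖x - y‖²`, and
`γ⁻¹ - L / 2 = (γ - (L / 2) γ²) γ⁻²`.
-/

open Set

open scoped RealInnerProductSpace

section TaylorRemainder

variable {E F : Type*} [NormedAddCommGroup E] [NormedSpace ℝ E] [NormedAddCommGroup F]
  [NormedSpace ℝ F]

theorem norm_image_sub_le_of_norm_deriv_le_mul_sub {g g' : ℝ → F} {a b C : ℝ}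
    (hg : ∀ t ∈ Icc a b, HasDerivWithinAt g (g' t) (Icc a b) t)
    (hbound : ∀ t ∈ Ico a b, ‖g' t‖ ≤ C * (t - a)) :
    ∀ t ∈ Icc a b, ‖g t - g a‖ ≤ C / 2 * (t - a) ^ 2 := by
  have hsub (t : ℝ) (ht : t ∈ Icc a b) :
      HasDerivWithinAt (fun t => g t - g a) (g' t) (Icc a b) t := (hg t ht).sub_const (g a)
  have hsub_right (t : ℝ) (ht : t ∈ Ico a b) :
      HasDerivWithinAt (fun t => g t - g a) (g' t) (Ici t) t :=
    (hsub t (Ico_subset_Icc_self ht)).mono_of_mem_nhdsWithin (Icc_mem_nhdsGE_of_mem ht)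
  have hquad (t : ℝ) : HasDerivAt (fun t => C / 2 * (t - a) ^ 2) (C * (t - a)) t :=
    ((((hasDerivAt_id t).sub_const a).pow 2).const_mul (C / 2)).congr_deriv
      (by simp only [id_eq]; ring)
  exact image_norm_le_of_norm_deriv_right_le_deriv_boundary
    (fun t ht => (hsub t ht).continuousWithinAt) hsub_right (by simp) hquad hbound

theorem norm_image_sub_sub_le_of_norm_hasFDerivWithin_sub_le_mul {f : E → F}
    {f' : E → E →L[ℝ] F} {s : Set E} {L : ℝ} {x y : E} (hs : Convex ℝ s)
    (hf : ∀ u ∈ s, HasFDerivWithinAt f (f' u) s u)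
    (hx : x ∈ s) (hy : y ∈ s) (hL : ∀ u ∈ s, ‖f' u - f' x‖ ≤ L * ‖u - x‖) :
    ‖f y - f x - f' x (y - x)‖ ≤ L / 2 * ‖y - x‖ ^ 2 := by
  let c : ℝ → E := AffineMap.lineMap x y
  have hc_mem : MapsTo c (Icc 0 1) s := hs.mapsTo_lineMap hx hy
  have hderiv : ∀ t ∈ Icc (0 : ℝ) 1, HasDerivWithinAt (fun t => f (c t) - t • f' x (y - x))
      ((f' (c t) - f' x) (y - x)) (Icc 0 1) t := fun t ht => by
    have hfc := (hf _ (hc_mem ht)).comp_hasDerivWithinAt t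
      AffineMap.hasDerivWithinAt_lineMap hc_mem
    exact (hfc.sub ((hasDerivWithinAt_id t _).smul_const (f' x (y - x)))).congr_deriv (by simp)
  have hbound : ∀ t ∈ Ico (0 : ℝ) 1,
      ‖(f' (c t) - f' x) (y - x)‖ ≤ L * ‖y - x‖ ^ 2 * (t - 0) := fun t ht => by
    have hc_sub : ‖c t - x‖ = t * ‖y - x‖ := by
      simp [c, AffineMap.lineMap_apply_module', norm_smul, abs_of_nonneg ht.1]
    calc ‖(f' (c t) - f' x) (y - x)‖
        ≤ L * ‖c t - x‖ * ‖y - x‖ :=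
          ContinuousLinearMap.le_of_opNorm_le _ (hL _ (hc_mem (Ico_subset_Icc_self ht))) _
      _ = L * ‖y - x‖ ^ 2 * (t - 0) := by rw [hc_sub]; ring
  have hremainder := norm_image_sub_le_of_norm_deriv_le_mul_sub hderiv hbound 1
    (right_mem_Icc.2 zero_le_one)
  calc ‖f y - f x - f' x (y - x)‖
      ≤ L * ‖y - x‖ ^ 2 / 2 := by simpa [c, sub_right_comm] using hremainder
    _ = L / 2 * ‖y - x‖ ^ 2 := by ring

end TaylorRemainder

section Projection

variable {F : Type*} [NormedAddCommGroup F] [InnerProductSpace ℝ F]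

theorem real_inner_sub_sub_nonpos_of_forall_norm_sub_le {K : Set F} {u v w : F}
    (hK : Convex ℝ K) (hv : v ∈ K) (hmin : ∀ z ∈ K, ‖u - v‖ ≤ ‖u - z‖) (hw : w ∈ K) :
    ⟪u - v, w - v⟫ ≤ 0 := by
  have : Nonempty K := ⟨⟨v, hv⟩⟩
  have hbdd : BddBelow (range fun z : K => ‖u - z‖) :=
    ⟨0, forall_mem_range.2 fun _ => norm_nonneg _⟩
  have hinf : ‖u - v‖ = ⨅ z : K, ‖u - z‖ :=
    le_antisymm (le_ciInf fun z => hmin z z.2) (ciInf_le hbdd ⟨v, hv⟩)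
  exact (norm_eq_iInf_iff_real_inner_le_zero hK hv).1 hinf w hw

theorem norm_sub_sq_le_mul_real_inner_of_forall_norm_sub_le {K : Set F} {x y d : F} {γ : ℝ}
    (hK : Convex ℝ K) (hx : x ∈ K) (hy : y ∈ K)
    (hmin : ∀ w ∈ K, ‖x - γ • d - y‖ ≤ ‖x - γ • d - w‖) :
    ‖x - y‖ ^ 2 ≤ γ * ⟪d, x - y⟫ := by
  have hvar := real_inner_sub_sub_nonpos_of_forall_norm_sub_le hK hy hmin hx
  rwa [sub_right_comm, inner_sub_left, real_inner_self_eq_norm_sq, real_inner_smul_left,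
    sub_nonpos] at hvar

end Projection

section Gradient

variable {F : Type*} [NormedAddCommGroup F] [InnerProductSpace ℝ F] [CompleteSpace F]
  {f : F → ℝ} {gradf : F → F} {L : ℝ} {x y : F}

theorem le_add_inner_gradient_add_of_norm_gradient_sub_le_mul {s : Set F} (hs : Convex ℝ s)
    (hgrad : ∀ u ∈ s, HasGradientWithinAt f (gradf u) s u) (hx : x ∈ s) (hy : y ∈ s)
    (hL : ∀ u ∈ s, ‖gradf u - gradf x‖ ≤ L * ‖u - x‖) :
    f y ≤ f x + ⟪gradf x, y - x⟫ + L / 2 * ‖y - x‖ ^ 2 := by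
  have hL_dual (u : F) (hu : u ∈ s) :
      ‖InnerProductSpace.toDual ℝ F (gradf u) - InnerProductSpace.toDual ℝ F (gradf x)‖
        ≤ L * ‖u - x‖ := by
    simpa only [← map_sub, LinearIsometryEquiv.norm_map] using hL u hu
  have hremainder := norm_image_sub_sub_le_of_norm_hasFDerivWithin_sub_le_mul hs
    (fun u hu => (hgrad u hu).hasFDerivWithinAt) hx hy hL_dual
  rw [InnerProductSpace.toDual_apply_apply] at hremainder
  linarith [Real.le_norm_self (f y - f x - ⟪gradf x, y - x⟫)]

theorem projected_gradient_descent_decrease_general {Φ : Set F} {γ : ℝ} (hΦ : Convex ℝ Φ)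
    (hgrad : ∀ u ∈ Φ, HasGradientWithinAt f (gradf u) Φ u) (hx : x ∈ Φ)
    (hL : ∀ u ∈ Φ, ‖gradf u - gradf x‖ ≤ L * ‖u - x‖) (hγ : 0 < γ) (hy : y ∈ Φ)
    (hproj : ∀ w ∈ Φ, ‖x - γ • gradf x - y‖ ≤ ‖x - γ • gradf x - w‖) :
    f y ≤ f x - (γ - L / 2 * γ ^ 2) * ‖γ⁻¹ • (x - y)‖ ^ 2 := by
  have hdecrease : γ⁻¹ * ‖x - y‖ ^ 2 ≤ ⟪gradf x, x - y⟫ :=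
    (inv_mul_le_iff₀ hγ).2 (norm_sub_sq_le_mul_real_inner_of_forall_norm_sub_le hΦ hx hy hproj)
  calc f y
      ≤ f x + ⟪gradf x, y - x⟫ + L / 2 * ‖y - x‖ ^ 2 :=
        le_add_inner_gradient_add_of_norm_gradient_sub_le_mul hΦ hgrad hx hy hL
    _ = f x - ⟪gradf x, x - y⟫ + L / 2 * ‖x - y‖ ^ 2 := by
        rw [← neg_sub x y, inner_neg_right, norm_neg, ← sub_eq_add_neg]
    _ ≤ f x - γ⁻¹ * ‖x - y‖ ^ 2 + L / 2 * ‖x - y‖ ^ 2 := by gcongr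
    _ = f x - (γ - L / 2 * γ ^ 2) * ‖γ⁻¹ • (x - y)‖ ^ 2 := by
        rw [norm_smul_of_nonneg (inv_nonneg.2 hγ.le)]
        field_simp
        ring

end Gradient

/-- **Sufficient decrease for the projected gradient step.**  Let `f : ℝ^p → ℝ` be
differentiable with `L`-Lipschitz gradient, `Φ` a nonempty closed convex set, `x ∈ Φ`,
`0 < γ < 2/L`, and `y = Π_Φ(x - γ∇f(x))` the metric projection.  With the gradient
mapping `G_γ(x) = (x - y)/γ` and `ν = γ - (L/2)γ² > 0`, we have
`f(y) ≤ f(x) - ν ‖G_γ(x)‖²`. -/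
theorem projected_gradient_descent_decrease {p : ℕ}
    (f : EuclideanSpace ℝ (Fin p) → ℝ)
    (gradf : EuclideanSpace ℝ (Fin p) → EuclideanSpace ℝ (Fin p))
    (hgrad : ∀ u, HasGradientAt f (gradf u) u)
    (L : ℝ) (hL : 0 < L)
    (hLip : ∀ u v, ‖gradf u - gradf v‖ ≤ L * ‖u - v‖)
    (Φ : Set (EuclideanSpace ℝ (Fin p))) (hne : Φ.Nonempty) (hclosed : IsClosed Φ)
    (hconv : Convex ℝ Φ)
    (x : EuclideanSpace ℝ (Fin p)) (hx : x ∈ Φ)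
    (γ : ℝ) (hγ0 : 0 < γ) (hγ2 : γ < 2 / L)
    (y : EuclideanSpace ℝ (Fin p)) (hy : y ∈ Φ)
    (hproj : ∀ w ∈ Φ, ‖x - γ • gradf x - y‖ ≤ ‖x - γ • gradf x - w‖) :
    f y ≤ f x - (γ - (L / 2) * γ ^ 2) * ‖γ⁻¹ • (x - y)‖ ^ 2 := by
  exact projected_gradient_descent_decrease_general hconv
    (fun u _ => (hgrad u).hasFDerivAt.hasFDerivWithinAt) hx
    (fun u _ => hLip u x) hγ0 hy hproj
end
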